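/- Let K be a commutative semiring with 0 ≠ 1 that is additively locally finite, and Δ a finite alphabet. A nested word series S : NW(Δ) → K is regular if and only if S is swRMSO(K)-definable. -/

import Mathlib

/-! ### Nested words and weighted nested word automata -/

/-- A nesting relation of width `n` (positions `1,…,n`). -/
def IsNestingRel (n : ℕ) (ν : ℕ → ℕ → Prop) : Prop :=
  (∀ i j, ν i j → 1 ≤ i ∧ i < j ∧ j ≤ n) ∧
  (∀ i j j', ν i j → ν i j' → j = j') ∧
  (∀ i i' j, ν i j → ν i' j → i = i') ∧
  (∀ i j i' j', ν i j → ν i' j' → i < i' → j < i' ∨ j' < j)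

/-- A nested word over `Δ`: a nonempty word together with a nesting relation. -/
structure NestedWord (Δ : Type) : Type where
  word : List Δ
  ne : word ≠ []
  rel : ℕ → ℕ → Prop
  isNest : IsNestingRel word.length rel

namespace NestedWord

variable {Δ : Type} (nw : NestedWord Δ)

/-- The length of the nested word. -/
def len : ℕ := nw.word.length

/-- The letter at (1-based) position `j`. -/
def letter (j : ℕ) : Δ := nw.word.getD (j - 1) (nw.word.head nw.ne)

def IsCall (j : ℕ) : Prop := ∃ i, nw.rel j i
def IsReturn (j : ℕ) : Prop := ∃ i, nw.rel i j
def IsInternal (j : ℕ) : Prop :=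
  1 ≤ j ∧ j ≤ nw.len ∧ ¬ nw.IsCall j ∧ ¬ nw.IsReturn j

/-- The nesting depth of position `k`: the number of arches open at `k`. -/
noncomputable def depth (k : ℕ) : ℕ :=
  Set.ncard {p : ℕ × ℕ | nw.rel p.1 p.2 ∧ p.1 ≤ k ∧ k ≤ p.2}

end NestedWord

/-- Clamp a function on `Fin (n+1)` to a function on `ℕ`. -/
def clampFun {Q : Type} {n : ℕ} (r : Fin (n + 1) → Q) : ℕ → Q :=
  fun k => r ⟨min k n, Nat.lt_succ_of_le (min_le_right _ _)⟩

/-- A weighted nested word automaton over the commutative semiring `K`. -/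
structure WNWA (K Δ : Type) [CommSemiring K] : Type 1 where
  Q : Type
  [fintQ : Fintype Q]
  ι : Q → K
  δcall : Q → Δ → Q → K
  δint : Q → Δ → Q → K
  δret : Q → Q → Δ → Q → K
  κ : Q → K

attribute [instance] WNWA.fintQ

namespace WNWA

variable {K Δ : Type} [CommSemiring K]

open Classical in
/-- The weight contributed by position `j` in a run `ρ`. -/
noncomputable def posWeight (A : WNWA K Δ) (nw : NestedWord Δ) (ρ : ℕ → A.Q) (j : ℕ) : K :=
  if nw.IsCall j then A.δcall (ρ (j - 1)) (nw.letter j) (ρ j)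
  else if h : nw.IsReturn j then
    A.δret (ρ (j - 1)) (ρ (h.choose - 1)) (nw.letter j) (ρ j)
  else A.δint (ρ (j - 1)) (nw.letter j) (ρ j)

/-- The weight of a run. -/
noncomputable def runWeight (A : WNWA K Δ) (nw : NestedWord Δ) (ρ : ℕ → A.Q) : K :=
  ∏ j ∈ Finset.Icc 1 nw.len, A.posWeight nw ρ j

/-- The behavior of a weighted nested word automaton. -/
noncomputable def behavior (A : WNWA K Δ) (nw : NestedWord Δ) : K :=
  ∑ r : Fin (nw.len + 1) → A.Q,
    A.ι (r 0) * A.runWeight nw (clampFun r) * A.κ (r (Fin.last _))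

end WNWA

/-- A nested word series is regular if it is the behavior of some WNWA. -/
def NWRegular {K Δ : Type} [CommSemiring K] (S : NestedWord Δ → K) : Prop :=
  ∃ A : WNWA K Δ, ∀ nw, A.behavior nw = S nw
/-! ### Weighted MSO logic over nested words -/

/-- Weighted MSO formulae over nested words: constants from `K`, atomic formulae
and their negations, closed under `∨`, `∧`, and the four quantifiers. -/
inductive WMSO (K Δ : Type) : Type where
  | const : K → WMSO K Δ
  | eqv : ℕ → ℕ → WMSO K Δ
  | lab : Δ → ℕ → WMSO K Δ
  | lev : ℕ → ℕ → WMSO K Δ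
  | nuv : ℕ → ℕ → WMSO K Δ
  | mem : ℕ → ℕ → WMSO K Δ
  | neq : ℕ → ℕ → WMSO K Δ
  | nlab : Δ → ℕ → WMSO K Δ
  | nle : ℕ → ℕ → WMSO K Δ
  | nnu : ℕ → ℕ → WMSO K Δ
  | nmem : ℕ → ℕ → WMSO K Δ
  | or : WMSO K Δ → WMSO K Δ → WMSO K Δ
  | and : WMSO K Δ → WMSO K Δ → WMSO K Δ
  | exF : ℕ → WMSO K Δ → WMSO K Δ
  | exS : ℕ → WMSO K Δ → WMSO K Δ
  | alF : ℕ → WMSO K Δ → WMSO K Δ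
  | alS : ℕ → WMSO K Δ → WMSO K Δ

namespace WMSO

variable {K Δ : Type} [CommSemiring K]

open Classical in
/-- Weighted semantics: `∨ ↦ +`, `∧ ↦ ·`, `∃ ↦ Σ`, `∀ ↦ Π`. -/
noncomputable def sem (nw : NestedWord Δ) :
    WMSO K Δ → (ℕ → ℕ) → (ℕ → Finset ℕ) → K
  | .const k, _, _ => k
  | .eqv x y, γ1, _ => if γ1 x = γ1 y then 1 else 0
  | .lab a x, γ1, _ => if nw.letter (γ1 x) = a then 1 else 0
  | .lev x y, γ1, _ => if γ1 x ≤ γ1 y then 1 else 0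
  | .nuv x y, γ1, _ => if nw.rel (γ1 x) (γ1 y) then 1 else 0
  | .mem x X, γ1, γ2 => if γ1 x ∈ γ2 X then 1 else 0
  | .neq x y, γ1, _ => if γ1 x = γ1 y then 0 else 1
  | .nlab a x, γ1, _ => if nw.letter (γ1 x) = a then 0 else 1
  | .nle x y, γ1, _ => if γ1 x ≤ γ1 y then 0 else 1
  | .nnu x y, γ1, _ => if nw.rel (γ1 x) (γ1 y) then 0 else 1
  | .nmem x X, γ1, γ2 => if γ1 x ∈ γ2 X then 0 else 1
  | .or φ ψ, γ1, γ2 => sem nw φ γ1 γ2 + sem nw ψ γ1 γ2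
  | .and φ ψ, γ1, γ2 => sem nw φ γ1 γ2 * sem nw ψ γ1 γ2
  | .exF x φ, γ1, γ2 =>
      ∑ i ∈ Finset.Icc 1 nw.len, sem nw φ (Function.update γ1 x i) γ2
  | .exS X φ, γ1, γ2 =>
      ∑ T ∈ (Finset.Icc 1 nw.len).powerset, sem nw φ γ1 (Function.update γ2 X T)
  | .alF x φ, γ1, γ2 =>
      ∏ i ∈ Finset.Icc 1 nw.len, sem nw φ (Function.update γ1 x i) γ2
  | .alS X φ, γ1, γ2 =>
      ∏ T ∈ (Finset.Icc 1 nw.len).powerset, sem nw φ γ1 (Function.update γ2 X T)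

/-- Free first-order variables. -/
def freeF : WMSO K Δ → Finset ℕ
  | .const _ => ∅
  | .eqv x y => {x, y}
  | .lab _ x => {x}
  | .lev x y => {x, y}
  | .nuv x y => {x, y}
  | .mem x _ => {x}
  | .neq x y => {x, y}
  | .nlab _ x => {x}
  | .nle x y => {x, y}
  | .nnu x y => {x, y}
  | .nmem x _ => {x}
  | .or φ ψ => φ.freeF ∪ ψ.freeF
  | .and φ ψ => φ.freeF ∪ ψ.freeF
  | .exF x φ => φ.freeF.erase x
  | .exS _ φ => φ.freeF
  | .alF x φ => φ.freeF.erase x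
  | .alS _ φ => φ.freeF

/-- Free second-order variables. -/
def freeS : WMSO K Δ → Finset ℕ
  | .mem _ X => {X}
  | .nmem _ X => {X}
  | .or φ ψ => φ.freeS ∪ ψ.freeS
  | .and φ ψ => φ.freeS ∪ ψ.freeS
  | .exF _ φ => φ.freeS
  | .alF _ φ => φ.freeS
  | .exS X φ => φ.freeS.erase X
  | .alS X φ => φ.freeS.erase X
  | _ => ∅

/-- Sentences: no free variables. -/
def Sentence (φ : WMSO K Δ) : Prop := φ.freeF = ∅ ∧ φ.freeS = ∅

end WMSO

/-! ### Classical MSO over nested words and syntactically unambiguous formulae -/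

/-- Classical MSO formulae over nested words. -/
inductive MSOF (Δ : Type) : Type where
  | eqv : ℕ → ℕ → MSOF Δ
  | lab : Δ → ℕ → MSOF Δ
  | lev : ℕ → ℕ → MSOF Δ
  | nuv : ℕ → ℕ → MSOF Δ
  | mem : ℕ → ℕ → MSOF Δ
  | not : MSOF Δ → MSOF Δ
  | or : MSOF Δ → MSOF Δ → MSOF Δ
  | and : MSOF Δ → MSOF Δ → MSOF Δ
  | exF : ℕ → MSOF Δ → MSOF Δ
  | exS : ℕ → MSOF Δ → MSOF Δ
  | alF : ℕ → MSOF Δ → MSOF Δ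
  | alS : ℕ → MSOF Δ → MSOF Δ

namespace MSOF

variable {Δ : Type}

/-- Substitution of first-order variable `x` by `y` (capture cannot occur for fresh `y`). -/
def substF (x y : ℕ) : MSOF Δ → MSOF Δ
  | eqv u v => eqv (if u = x then y else u) (if v = x then y else v)
  | lab a u => lab a (if u = x then y else u)
  | lev u v => lev (if u = x then y else u) (if v = x then y else v)
  | nuv u v => nuv (if u = x then y else u) (if v = x then y else v)
  | mem u X => mem (if u = x then y else u) X
  | not φ => not (substF x y φ)
  | or φ ψ => or (substF x y φ) (substF x y ψ)
  | and φ ψ => and (substF x y φ) (substF x y ψ)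
  | exF z φ => if z = x then exF z φ else exF z (substF x y φ)
  | exS Z φ => exS Z (substF x y φ)
  | alF z φ => if z = x then alF z φ else alF z (substF x y φ)
  | alS Z φ => alS Z (substF x y φ)

/-- Substitution of second-order variable `X` by `Y`. -/
def substS (X Y : ℕ) : MSOF Δ → MSOF Δ
  | mem u Z => mem u (if Z = X then Y else Z)
  | not φ => not (substS X Y φ)
  | or φ ψ => or (substS X Y φ) (substS X Y ψ)
  | and φ ψ => and (substS X Y φ) (substS X Y ψ)
  | exF z φ => exF z (substS X Y φ)
  | exS Z φ => if Z = X then exS Z φ else exS Z (substS X Y φ)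
  | alF z φ => alF z (substS X Y φ)
  | alS Z φ => if Z = X then alS Z φ else alS Z (substS X Y φ)
  | φ => φ

/-- Largest first-order variable occurring (free or bound). -/
def maxF : MSOF Δ → ℕ
  | eqv u v => max u v
  | lab _ u => u
  | lev u v => max u v
  | nuv u v => max u v
  | mem u _ => u
  | not φ => φ.maxF
  | or φ ψ => max φ.maxF ψ.maxF
  | and φ ψ => max φ.maxF ψ.maxF
  | exF z φ => max z φ.maxF
  | exS _ φ => φ.maxF
  | alF z φ => max z φ.maxF
  | alS _ φ => φ.maxF

/-- Largest second-order variable occurring (free or bound). -/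
def maxS : MSOF Δ → ℕ
  | mem _ X => X
  | not φ => φ.maxS
  | or φ ψ => max φ.maxS ψ.maxS
  | and φ ψ => max φ.maxS ψ.maxS
  | exF _ φ => φ.maxS
  | exS Z φ => max Z φ.maxS
  | alF _ φ => φ.maxS
  | alS Z φ => max Z φ.maxS
  | _ => 0

end MSOF

/-- The lexicographic (strict) order `Y < X` on sets, used to disambiguate set
quantification: `∃y. y ∈ X ∧ ¬ y ∈ Y ∧ ∀z. (z < y → (z ∈ Y ↔ z ∈ X))`,
where `y` and `z` are the first-order variables `0` and `1`. -/
def lessSet {Δ : Type} (Y X : ℕ) : MSOF Δ :=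
  .exF 0 (.and (.mem 0 X) (.and (.not (.mem 0 Y))
    (.alF 1 (.or (.lev 0 1)
      (.and (.or (.not (.mem 1 Y)) (.mem 1 X)) (.or (.not (.mem 1 X)) (.mem 1 Y)))))))

mutual
  /-- `PlusOf K ψ φ` : `φ = ψ⁺`, the positive syntactically unambiguous weighted
  version of the classical formula `ψ`. -/
  inductive PlusOf (K : Type) {Δ : Type} : MSOF Δ → WMSO K Δ → Prop where
    | eqv : ∀ x y, PlusOf K (.eqv x y) (.eqv x y)
    | lab : ∀ (a : Δ) x, PlusOf K (.lab a x) (.lab a x)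
    | lev : ∀ x y, PlusOf K (.lev x y) (.lev x y)
    | nuv : ∀ x y, PlusOf K (.nuv x y) (.nuv x y)
    | mem : ∀ x X, PlusOf K (.mem x X) (.mem x X)
    | not : ∀ {ψ : MSOF Δ} {χ}, MinusOf K ψ χ → PlusOf K (.not ψ) χ
    | or : ∀ {ψ₁ ψ₂ : MSOF Δ} {a b c}, PlusOf K ψ₁ a → MinusOf K ψ₁ b → PlusOf K ψ₂ c →
        PlusOf K (.or ψ₁ ψ₂) (.or a (.and b c))
    | and : ∀ {ψ₁ ψ₂ : MSOF Δ} {a b}, PlusOf K ψ₁ a → PlusOf K ψ₂ b →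
        PlusOf K (.and ψ₁ ψ₂) (.and a b)
    | exF : ∀ {x : ℕ} {ψ : MSOF Δ} {a χ} (y : ℕ), y = (MSOF.exF x ψ).maxF + 1 →
        PlusOf K ψ a →
        MinusOf K (.and (.not (.lev x y)) (ψ.substF x y)) χ →
        PlusOf K (.exF x ψ) (.exF x (.and a (.alF y χ)))
    | alF : ∀ {x : ℕ} {ψ : MSOF Δ} {a}, PlusOf K ψ a → PlusOf K (.alF x ψ) (.alF x a)
    | exS : ∀ {X : ℕ} {ψ : MSOF Δ} {a χ} (Y : ℕ), Y = (MSOF.exS X ψ).maxS + 1 →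
        PlusOf K ψ a →
        MinusOf K (.and (lessSet Y X) (ψ.substS X Y)) χ →
        PlusOf K (.exS X ψ) (.exS X (.and a (.alS Y χ)))
    | alS : ∀ {X : ℕ} {ψ : MSOF Δ} {a}, PlusOf K ψ a → PlusOf K (.alS X ψ) (.alS X a)

  /-- `MinusOf K ψ φ` : `φ = ψ⁻`. -/
  inductive MinusOf (K : Type) {Δ : Type} : MSOF Δ → WMSO K Δ → Prop where
    | eqv : ∀ x y, MinusOf K (.eqv x y) (.neq x y)
    | lab : ∀ (a : Δ) x, MinusOf K (.lab a x) (.nlab a x)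
    | lev : ∀ x y, MinusOf K (.lev x y) (.nle x y)
    | nuv : ∀ x y, MinusOf K (.nuv x y) (.nnu x y)
    | mem : ∀ x X, MinusOf K (.mem x X) (.nmem x X)
    | not : ∀ {ψ : MSOF Δ} {χ}, PlusOf K ψ χ → MinusOf K (.not ψ) χ
    | or : ∀ {ψ₁ ψ₂ : MSOF Δ} {a b}, MinusOf K ψ₁ a → MinusOf K ψ₂ b →
        MinusOf K (.or ψ₁ ψ₂) (.and a b)
    | and : ∀ {ψ₁ ψ₂ : MSOF Δ} {a b c}, MinusOf K ψ₁ a → PlusOf K ψ₁ b → MinusOf K ψ₂ c →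
        MinusOf K (.and ψ₁ ψ₂) (.or a (.and b c))
    | exF : ∀ {x : ℕ} {ψ : MSOF Δ} {a}, MinusOf K ψ a → MinusOf K (.exF x ψ) (.alF x a)
    | alF : ∀ {x : ℕ} {ψ : MSOF Δ} {a χ} (y : ℕ), y = (MSOF.alF x ψ).maxF + 1 →
        MinusOf K ψ a →
        MinusOf K (.and (.not (.lev x y)) (.not (ψ.substF x y))) χ →
        MinusOf K (.alF x ψ) (.exF x (.and a (.alF y χ)))
    | exS : ∀ {X : ℕ} {ψ : MSOF Δ} {a}, MinusOf K ψ a → MinusOf K (.exS X ψ) (.alS X a)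
    | alS : ∀ {X : ℕ} {ψ : MSOF Δ} {a χ} (Y : ℕ), Y = (MSOF.alS X ψ).maxS + 1 →
        MinusOf K ψ a →
        MinusOf K (.and (lessSet Y X) (.not (ψ.substS X Y))) χ →
        MinusOf K (.alS X ψ) (.exS X (.and a (.alS Y χ)))
end

/-- A weighted formula is syntactically unambiguous if it is of the form `ψ⁺` or
`ψ⁻` for a classical formula `ψ`. -/
def SyntUnamb {K Δ : Type} (φ : WMSO K Δ) : Prop :=
  ∃ ψ : MSOF Δ, PlusOf K ψ φ ∨ MinusOf K ψ φ

/-- Almost unambiguous formulae: the smallest class containing all constants and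
all syntactically unambiguous formulae which is closed under `∧` and `∨`. -/
inductive AUMSO {K Δ : Type} : WMSO K Δ → Prop where
  | const (k : K) : AUMSO (.const k)
  | unamb {φ : WMSO K Δ} : SyntUnamb φ → AUMSO φ
  | and {φ ψ : WMSO K Δ} : AUMSO φ → AUMSO ψ → AUMSO (.and φ ψ)
  | or {φ ψ : WMSO K Δ} : AUMSO φ → AUMSO ψ → AUMSO (.or φ ψ)

/-- Weakly unambiguous formulae: additionally closed under existential quantification. -/
inductive WUMSO {K Δ : Type} : WMSO K Δ → Prop where
  | const (k : K) : WUMSO (.const k)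
  | unamb {φ : WMSO K Δ} : SyntUnamb φ → WUMSO φ
  | and {φ ψ : WMSO K Δ} : WUMSO φ → WUMSO ψ → WUMSO (.and φ ψ)
  | or {φ ψ : WMSO K Δ} : WUMSO φ → WUMSO ψ → WUMSO (.or φ ψ)
  | exF {x : ℕ} {φ : WMSO K Δ} : WUMSO φ → WUMSO (.exF x φ)
  | exS {X : ℕ} {φ : WMSO K Δ} : WUMSO φ → WUMSO (.exS X φ)

/-- Syntactically restricted MSO: every subformula `∀X.ψ` has `ψ` syntactically
unambiguous and every subformula `∀x.ψ` has `ψ` almost unambiguous. -/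
def SRMSO {K Δ : Type} : WMSO K Δ → Prop
  | .or φ ψ => SRMSO φ ∧ SRMSO ψ
  | .and φ ψ => SRMSO φ ∧ SRMSO ψ
  | .exF _ φ => SRMSO φ
  | .exS _ φ => SRMSO φ
  | .alF _ φ => AUMSO φ ∧ SRMSO φ
  | .alS _ φ => SyntUnamb φ ∧ SRMSO φ
  | _ => True

/-- Syntactically weakly restricted MSO. -/
def SWRMSO {K Δ : Type} : WMSO K Δ → Prop
  | .or φ ψ => SWRMSO φ ∧ SWRMSO ψ
  | .and φ ψ => SWRMSO φ ∧ SWRMSO ψ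
  | .exF _ φ => SWRMSO φ
  | .exS _ φ => SWRMSO φ
  | .alF _ φ => WUMSO φ ∧ SWRMSO φ
  | .alS _ φ => SyntUnamb φ ∧ SWRMSO φ
  | _ => True

/-- Formulae without set quantification. -/
def NoSetQuant {K Δ : Type} : WMSO K Δ → Prop
  | .or φ ψ => NoSetQuant φ ∧ NoSetQuant ψ
  | .and φ ψ => NoSetQuant φ ∧ NoSetQuant ψ
  | .exF _ φ => NoSetQuant φ
  | .alF _ φ => NoSetQuant φ
  | .exS _ _ => False
  | .alS _ _ => False
  | _ => True

/-- First-order fragment of `SRMSO`. -/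
def SRFO {K Δ : Type} (φ : WMSO K Δ) : Prop := SRMSO φ ∧ NoSetQuant φ

/-- `∃X₁.…∃Xₘ.ψ` with `ψ ∈ sRFO(K)`. -/
inductive SREMSO {K Δ : Type} : WMSO K Δ → Prop where
  | base {φ : WMSO K Δ} : SRFO φ → SREMSO φ
  | exS {X : ℕ} {φ : WMSO K Δ} : SREMSO φ → SREMSO (.exS X φ)

/-- A nested word series is `Z`-definable if it is the semantics of a sentence in `Z`. -/
def NWDefinable {K Δ : Type} [CommSemiring K] (Z : WMSO K Δ → Prop)
    (S : NestedWord Δ → K) : Prop :=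
  ∃ φ : WMSO K Δ, Z φ ∧ φ.Sentence ∧ ∀ nw γ1 γ2, φ.sem nw γ1 γ2 = S nw
/-- `K` is additively locally finite: every finitely generated submonoid of
`(K,+,0)` is finite. -/
def AddLocallyFinite (K : Type) [CommSemiring K] : Prop :=
  ∀ s : Finset K, ((AddSubmonoid.closure (s : Set K) : AddSubmonoid K) : Set K).Finite

/-! A weakly unambiguous formula takes, at the encodings of a nested word with an assignment as a
nested word over marked letters, the values of a recognizable step function. For the quantifiers
`∃x` and `∃X` this needs additive local finiteness: the coefficient of each value is a number of
runs, computed in the finite semiring generated by `1`, and automata with weights in a finite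
semiring can be determinized by keeping track of the matrix of partial sums over the segment that
starts at the innermost open call. The product `∀x` of a recognizable step function is computed by
guessing the final state for every position; that all guesses are right is again recognizable.

Conversely, set variables code a run by the bits of the state in front of each position. The final
state is not coded and is summed out at the last position. The weight of a run is then a product
over the positions of values of a weakly unambiguous formula, which fetches the states it needs at
the next position and at the matching call by first-order quantification. -/

section NestedWordStructure

/-- The three kinds of positions of a nested word. -/
inductive PosKind : Type where
  | call | int | ret

instance : Finite PosKind := Set.finite_univ_iff.1 <|
  (Set.toFinite {.call, .int, .ret}).subset fun k _ => by cases k <;> simp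

namespace NestedWord

open Finset

variable {Δ : Type} (nw : NestedWord Δ)

open Classical in
/-- The kind of the position `j`. -/
noncomputable def kind (j : ℕ) : PosKind :=
  if nw.IsCall j then .call else if nw.IsReturn j then .ret else .int

open Classical in
/-- The index of the state of a run that, besides the state at `j - 1`, is inspected at position
`j`: the one in front of the matching call if `j` is a return, and `j - 1` otherwise. -/
noncomputable def back (j : ℕ) : ℕ :=
  if h : nw.IsReturn j then h.choose - 1 else j - 1

open Classical in
/-- The innermost call that is still open after position `k`, and `0` if there is none. -/
noncomputable def innermostCall (k : ℕ) : ℕ :=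
  Nat.findGreatest (fun i => ∃ j, nw.rel i j ∧ k < j) k

variable {nw}

theorem len_pos : 0 < nw.len := List.length_pos_iff.2 nw.ne

theorem rel_bounds {i j : ℕ} (h : nw.rel i j) : 1 ≤ i ∧ i < j ∧ j ≤ nw.len := nw.isNest.1 i j h

theorem rel_noncrossing {i j i' j' : ℕ} (h : nw.rel i j) (h' : nw.rel i' j') (hi : i < i') :
    j < i' ∨ j' < j := nw.isNest.2.2.2 i j i' j' h h' hi

theorem not_isCall_and_isReturn (j : ℕ) : ¬ (nw.IsCall j ∧ nw.IsReturn j) := by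
  rintro ⟨⟨k, hk⟩, ⟨i, hi⟩⟩
  have := rel_bounds hi
  have := rel_bounds hk
  have := rel_noncrossing hi hk (by omega)
  omega

theorem kind_eq_ret_iff {j : ℕ} : nw.kind j = .ret ↔ nw.IsReturn j := by
  have := nw.not_isCall_and_isReturn j
  unfold kind
  split_ifs <;> simp_all

theorem kind_eq_call_iff {j : ℕ} : nw.kind j = .call ↔ nw.IsCall j := by
  unfold kind
  split_ifs <;> simp_all

theorem kind_eq_int_iff {j : ℕ} : nw.kind j = .int ↔ ¬ nw.IsCall j ∧ ¬ nw.IsReturn j := by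
  unfold kind
  split_ifs <;> simp_all

theorem isCall_iff {i : ℕ} : nw.IsCall i ↔ ∃ j ∈ Icc 1 nw.len, nw.rel i j :=
  exists_congr fun _ => (and_iff_right_of_imp fun h => by
    have := rel_bounds h
    exact mem_Icc.2 (by omega)).symm

theorem isReturn_iff {j : ℕ} : nw.IsReturn j ↔ ∃ i ∈ Icc 1 nw.len, nw.rel i j :=
  exists_congr fun _ => (and_iff_right_of_imp fun h => by
    have := rel_bounds h
    exact mem_Icc.2 (by omega)).symm

theorem back_eq_of_rel {i j : ℕ} (h : nw.rel i j) : nw.back j = i - 1 := by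
  have hj : nw.IsReturn j := ⟨i, h⟩
  rw [back, dif_pos hj, nw.isNest.2.2.1 _ _ _ hj.choose_spec h]

theorem back_of_kind_ne_ret {j : ℕ} (h : nw.kind j ≠ .ret) : nw.back j = j - 1 :=
  dif_neg (mt kind_eq_ret_iff.2 h)

theorem rel_back_of_kind_eq_ret {j : ℕ} (h : nw.kind j = .ret) : nw.rel (nw.back j + 1) j := by
  obtain ⟨i, hi⟩ := kind_eq_ret_iff.1 h
  rwa [back_eq_of_rel hi, Nat.sub_add_cancel (rel_bounds hi).1]

theorem back_le (j : ℕ) : nw.back j ≤ j - 1 := by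
  by_cases h : nw.kind j = .ret
  · have := rel_bounds (rel_back_of_kind_eq_ret h)
    omega
  · exact (back_of_kind_ne_ret h).le

theorem rel_iff {i j : ℕ} :
    nw.rel i j ↔ j ∈ Icc 1 nw.len ∧ nw.kind j = .ret ∧ nw.back j + 1 = i := by
  refine ⟨fun h => ?_, fun ⟨_, h, hi⟩ => hi ▸ rel_back_of_kind_eq_ret h⟩
  have := rel_bounds h
  exact ⟨mem_Icc.2 (by omega), kind_eq_ret_iff.2 ⟨i, h⟩, by rw [back_eq_of_rel h]; omega⟩

theorem innermostCall_eq_iff {k m : ℕ} : nw.innermostCall k = m ↔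
    m ≤ k ∧ (m ≠ 0 → ∃ j, nw.rel m j ∧ k < j) ∧
      ∀ i j, m < i → i ≤ k → nw.rel i j → j ≤ k := by
  classical
  simp only [innermostCall, Nat.findGreatest_eq_iff]
  refine and_congr_right' (and_congr_right' ⟨fun h i j hi hk hij => ?_, ?_⟩)
  · by_contra! hj
    exact h hi hk ⟨j, hij, hj⟩
  · rintro h i hi hk ⟨j, hij, hj⟩
    exact (h i j hi hk hij).not_gt hj

theorem innermostCall_le (k : ℕ) : nw.innermostCall k ≤ k := (innermostCall_eq_iff.1 rfl).1

theorem innermostCall_zero : nw.innermostCall 0 = 0 := by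
  simpa using nw.innermostCall_le 0

theorem innermostCall_len : nw.innermostCall nw.len = 0 :=
  innermostCall_eq_iff.2
    ⟨Nat.zero_le _, fun h => absurd rfl h, fun _ _ _ _ h => (rel_bounds h).2.2⟩

theorem innermostCall_of_call {k : ℕ} (h : nw.kind (k + 1) = .call) :
    nw.innermostCall (k + 1) = k + 1 := by
  obtain ⟨j, hj⟩ := kind_eq_call_iff.1 h
  exact innermostCall_eq_iff.2 ⟨le_rfl, fun _ => ⟨j, hj, (rel_bounds hj).2.1⟩, by omega⟩

theorem innermostCall_of_int {k : ℕ} (h : nw.kind (k + 1) = .int) :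
    nw.innermostCall (k + 1) = nw.innermostCall k := by
  obtain ⟨hc, hr⟩ := kind_eq_int_iff.1 h
  obtain ⟨hle, hopen, hmax⟩ := innermostCall_eq_iff.1 (rfl : nw.innermostCall k = _)
  refine innermostCall_eq_iff.2 ⟨by omega, fun h0 => ?_, fun i j hi hk hij => ?_⟩
  · obtain ⟨j, hij, hj⟩ := hopen h0
    have : j ≠ k + 1 := by rintro rfl; exact hr ⟨_, hij⟩
    exact ⟨j, hij, by omega⟩
  · have : i ≠ k + 1 := by rintro rfl; exact hc ⟨_, hij⟩
    have := hmax i j hi (by omega) hij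
    omega

theorem innermostCall_eq_of_rel_succ {i k : ℕ} (h : nw.rel i (k + 1)) :
    nw.innermostCall k = i := by
  have hi := rel_bounds h
  refine innermostCall_eq_iff.2
    ⟨by omega, fun _ => ⟨k + 1, h, by omega⟩, fun i' j' hi' hk h' => ?_⟩
  have := rel_noncrossing h h' hi'
  omega

theorem innermostCall_succ_of_rel_succ {i k : ℕ} (h : nw.rel i (k + 1)) :
    nw.innermostCall (k + 1) = nw.innermostCall (i - 1) := by
  have hi := rel_bounds h
  obtain ⟨hle, hopen, hmax⟩ := innermostCall_eq_iff.1 (rfl : nw.innermostCall (i - 1) = _)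
  refine innermostCall_eq_iff.2 ⟨by omega, fun h0 => ?_, fun i' j' hi' hk h' => ?_⟩
  · obtain ⟨j', h', hj'⟩ := hopen h0
    have := rel_noncrossing h' h (by omega)
    exact ⟨j', h', by omega⟩
  · rcases lt_trichotomy i i' with hlt | rfl | hlt
    · have := rel_noncrossing h h' hlt
      omega
    · exact (nw.isNest.2.1 _ _ _ h' h).le
    · have := hmax i' j' hi' (by omega) h'
      omega

/-- The nested word of the same shape as `nw` that carries the letter `l j` at position `j`. -/
def relabel {L : Type} (nw : NestedWord Δ) (l : ℕ → L) : NestedWord L where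
  word := List.ofFn fun i : Fin nw.len => l (i + 1)
  ne := by simpa using nw.len_pos.ne'
  rel := nw.rel
  isNest := by rw [List.length_ofFn]; exact nw.isNest

/-- The letterwise image of a nested word. -/
def map {L : Type} (f : Δ → L) (nw : NestedWord Δ) : NestedWord L :=
  nw.relabel fun j => f (nw.letter j)

/-- The nested word `nw` with the additional mark `u j` at each position `j`. -/
def annotate {B : Type} (nw : NestedWord Δ) (u : ℕ → B) : NestedWord (Δ × B) :=
  nw.relabel fun j => (nw.letter j, u j)

/-- The marks `u`, given for the positions `1, …, nw.len` but indexed from `0`, as a function on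
all of `ℕ`; the values outside of the word are irrelevant. -/
def extend {B : Type} (nw : NestedWord Δ) (u : Fin nw.len → B) (j : ℕ) : B :=
  u ⟨min (j - 1) (nw.len - 1), by have := nw.len_pos; omega⟩

section relabel

variable {L L' : Type}

@[simp] theorem len_relabel (l : ℕ → L) : (nw.relabel l).len = nw.len := List.length_ofFn

@[simp] theorem len_map (f : Δ → L) : (nw.map f).len = nw.len := len_relabel _

@[simp] theorem len_annotate (u : ℕ → L) : (nw.annotate u).len = nw.len := len_relabel _

theorem letter_relabel (l : ℕ → L) {j : ℕ} (hj : j ∈ Icc 1 nw.len) :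
    (nw.relabel l).letter j = l j := by
  rw [mem_Icc] at hj
  rw [letter, relabel, List.getD_eq_getElem _ _ (by simp; omega), List.getElem_ofFn,
    Nat.sub_add_cancel hj.1]

theorem letter_map (f : Δ → L) {j : ℕ} (hj : j ∈ Icc 1 nw.len) :
    (nw.map f).letter j = f (nw.letter j) := letter_relabel _ hj

theorem letter_annotate (u : ℕ → L) {j : ℕ} (hj : j ∈ Icc 1 nw.len) :
    (nw.annotate u).letter j = (nw.letter j, u j) := letter_relabel _ hj

theorem relabel_congr {l l' : ℕ → L} (h : ∀ j ∈ Icc 1 nw.len, l j = l' j) :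
    nw.relabel l = nw.relabel l' := by
  have : (fun i : Fin nw.len => l (i + 1)) = fun i : Fin nw.len => l' (i + 1) :=
    funext fun i => h _ (by simp)
  simp only [relabel, this]

theorem annotate_congr {u u' : ℕ → L} (h : ∀ j ∈ Icc 1 nw.len, u j = u' j) :
    nw.annotate u = nw.annotate u' := relabel_congr fun j hj => by rw [h j hj]

theorem relabel_relabel (l : ℕ → L) (l' : ℕ → L') :
    (nw.relabel l).relabel l' = nw.relabel l' := by
  simp only [relabel]
  congr 1
  exact List.ofFn_congr (len_relabel l) _

theorem map_relabel (l : ℕ → L) (f : L → L') :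
    (nw.relabel l).map f = nw.relabel fun j => f (l j) := by
  rw [map, relabel_relabel]
  exact relabel_congr fun j hj => by rw [letter_relabel l hj]

theorem annotate_relabel (l : ℕ → L) (u : ℕ → L') :
    (nw.relabel l).annotate u = nw.relabel fun j => (l j, u j) := by
  rw [annotate, relabel_relabel]
  exact relabel_congr fun j hj => by rw [letter_relabel l hj]

theorem extend_succ (u : Fin nw.len → L) (i : Fin nw.len) : nw.extend u (i + 1) = u i :=
  congrArg u (Fin.ext (by simp; omega))

end relabel

end NestedWord

end NestedWordStructure

section WeightedAutomata

open Finset NestedWord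

variable {K Δ L B Q : Type} [CommSemiring K]

theorem clampFun_of_le {n : ℕ} (r : Fin (n + 1) → Q) {k : ℕ} (h : k ≤ n) :
    clampFun r k = r ⟨k, Nat.lt_succ_of_le h⟩ := by
  simp [clampFun, h]

theorem prod_Icc_one_eq_prod_fin (n : ℕ) (g : ℕ → K) :
    ∏ j ∈ Icc 1 n, g j = ∏ i : Fin n, g (i + 1) := by
  rw [← prod_range (fun i => g (i + 1)), range_eq_Ico, prod_Ico_add' g 0 n 1]
  congr 1

/-- The weight of position `j` in the run `ρ` for the transition weights `t`. The arguments of `t`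
are the kind of the position, the state before it, the state at the index `NestedWord.back`, the
letter, and the state after it. -/
noncomputable def stepWeight (t : PosKind → Q → Q → Δ → Q → K) (nw : NestedWord Δ) (ρ : ℕ → Q)
    (j : ℕ) : K :=
  t (nw.kind j) (ρ (j - 1)) (ρ (nw.back j)) (nw.letter j) (ρ j)

/-- The total weight of all runs for the transition weights `t`: the behavior of an automaton whose
three transition functions are presented as one. -/
noncomputable def runSum [Fintype Q] (ι : Q → K) (t : PosKind → Q → Q → Δ → Q → K) (κ : Q → K)
    (nw : NestedWord Δ) : K :=
  ∑ r : Fin (nw.len + 1) → Q,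
    ι (r 0) * (∏ j ∈ Icc 1 nw.len, stepWeight t nw (clampFun r) j) * κ (r (Fin.last _))

/-- The three transition functions of an automaton, merged into one. -/
def WNWA.tr (A : WNWA K Δ) : PosKind → A.Q → A.Q → Δ → A.Q → K
  | .call, p, _, a, q => A.δcall p a q
  | .int, p, _, a, q => A.δint p a q
  | .ret, p, c, a, q => A.δret p c a q

theorem WNWA.posWeight_eq_stepWeight (A : WNWA K Δ) (nw : NestedWord Δ) (ρ : ℕ → A.Q) (j : ℕ) :
    A.posWeight nw ρ j = stepWeight A.tr nw ρ j := by
  unfold posWeight stepWeight kind back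
  split_ifs <;> rfl

theorem WNWA.behavior_eq_runSum (A : WNWA K Δ) : A.behavior = runSum A.ι A.tr A.κ := by
  funext nw
  simp only [behavior, runWeight, posWeight_eq_stepWeight, runSum]

theorem nwRegular_runSum [Fintype Q] (ι : Q → K) (t : PosKind → Q → Q → Δ → Q → K) (κ : Q → K) :
    NWRegular (runSum ι t κ) := by
  let A : WNWA K Δ :=
    ⟨Q, ι, fun p a q => t .call p p a q, fun p a q => t .int p p a q, t .ret, κ⟩
  refine ⟨A, fun nw => ?_⟩
  rw [A.behavior_eq_runSum]
  refine sum_congr rfl fun r _ => congrArg (ι (r 0) * · * κ _) (prod_congr rfl fun j _ => ?_)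
  unfold stepWeight
  cases h : nw.kind j
  · rw [back_of_kind_ne_ret (by simp [h])]; rfl
  · rw [back_of_kind_ne_ret (by simp [h])]; rfl
  · rfl

theorem nwRegular_iff {S : NestedWord Δ → K} : NWRegular S ↔
    ∃ (Q : Type) (_ : Fintype Q) (ι : Q → K) (t : PosKind → Q → Q → Δ → Q → K) (κ : Q → K),
      S = runSum ι t κ := by
  constructor
  · rintro ⟨A, hA⟩
    exact ⟨A.Q, A.fintQ, A.ι, A.tr, A.κ, by rw [← A.behavior_eq_runSum, funext hA]⟩
  · rintro ⟨Q, _, ι, t, κ, rfl⟩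
    exact nwRegular_runSum ι t κ

theorem runSum_relabel [Fintype Q] (ι : Q → K) (t : PosKind → Q → Q → L → Q → K) (κ : Q → K)
    (nw : NestedWord Δ) (l : ℕ → L) : runSum ι t κ (nw.relabel l) =
      ∑ r : Fin (nw.len + 1) → Q,
        ι (r 0) * (∏ j ∈ Icc 1 nw.len, t (nw.kind j) (clampFun r (j - 1)) (clampFun r (nw.back j))
          (l j) (clampFun r j)) * κ (r (Fin.last _)) := by
  have hlen {n : ℕ} (hn : (nw.relabel l).len = n) : runSum ι t κ (nw.relabel l) =
      ∑ r : Fin (n + 1) → Q, ι (r 0) *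
        (∏ j ∈ Icc 1 n, stepWeight t (nw.relabel l) (clampFun r) j) * κ (r (Fin.last _)) := by
    subst hn
    rfl
  rw [hlen (len_relabel l)]
  refine sum_congr rfl fun r _ => congrArg (ι (r 0) * · * κ _) (prod_congr rfl fun j hj => ?_)
  rw [stepWeight, letter_relabel l hj]
  rfl

theorem NWRegular.comap {S : NestedWord L → K} (hS : NWRegular S) (f : Δ → L) :
    NWRegular fun nw => S (nw.map f) := by
  obtain ⟨Q, _, ι, t, κ, rfl⟩ := nwRegular_iff.1 hS
  convert nwRegular_runSum ι (fun k p c a q => t k p c (f a) q) κ using 2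
  simp only [NestedWord.map, runSum_relabel]
  rfl

theorem NWRegular.mul {S S' : NestedWord Δ → K} (hS : NWRegular S) (hS' : NWRegular S') :
    NWRegular fun nw => S nw * S' nw := by
  obtain ⟨Q, _, ι, t, κ, rfl⟩ := nwRegular_iff.1 hS
  obtain ⟨Q', _, ι', t', κ', rfl⟩ := nwRegular_iff.1 hS'
  convert nwRegular_runSum (fun q : Q × Q' => ι q.1 * ι' q.2)
    (fun k p c a q => t k p.1 c.1 a q.1 * t' k p.2 c.2 a q.2)
    (fun q => κ q.1 * κ' q.2) using 2 with nw
  simp only [runSum]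
  rw [sum_mul_sum, ← sum_product', univ_product_univ,
    ← (Equiv.arrowProdEquivProdArrow _ (fun _ => Q) (fun _ => Q')).symm.sum_comp]
  refine sum_congr rfl fun r _ => ?_
  simp only [stepWeight, prod_mul_distrib, Equiv.arrowProdEquivProdArrow, Equiv.coe_fn_symm_mk,
    clampFun]
  ring

theorem NWRegular.sum_annotate [Fintype B] {S : NestedWord (Δ × B) → K} (hS : NWRegular S) :
    NWRegular fun nw => ∑ u : Fin nw.len → B, S (nw.annotate (nw.extend u)) := by
  classical
  obtain ⟨Q, _, ι, t, κ, rfl⟩ := nwRegular_iff.1 hS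
  convert nwRegular_runSum ι (fun k p c a q => ∑ b, t k p c (a, b) q) κ using 2 with nw
  simp only [annotate, runSum_relabel]
  rw [sum_comm]
  refine sum_congr rfl fun r _ => ?_
  rw [← sum_mul, ← mul_sum]
  simp only [stepWeight, prod_Icc_one_eq_prod_fin, extend_succ, prod_univ_sum,
    Fintype.piFinset_univ]

/-- The transition weights of the disjoint union of two automata. -/
def sumTr {Q' : Type} (t : PosKind → Q → Q → Δ → Q → K) (t' : PosKind → Q' → Q' → Δ → Q' → K) :
    PosKind → Q ⊕ Q' → Q ⊕ Q' → Δ → Q ⊕ Q' → K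
  | k, .inl p, .inl c, a, .inl q => t k p c a q
  | k, .inr p, .inr c, a, .inr q => t' k p c a q
  | _, _, _, _, _ => 0

theorem sumTr_eq_zero {Q' : Type} (t : PosKind → Q → Q → Δ → Q → K)
    (t' : PosKind → Q' → Q' → Δ → Q' → K) (k : PosKind) (c : Q ⊕ Q') (a : Δ) {p q : Q ⊕ Q'}
    (h : q.isLeft ≠ p.isLeft) : sumTr t t' k p c a q = 0 := by
  rcases p with p | p <;> rcases c with c | c <;> rcases q with q | q <;>
    first | rfl | exact absurd rfl h

theorem eq_inl_comp_or_eq_inr_comp {Q' : Type} {n : ℕ} {r : Fin (n + 1) → Q ⊕ Q'}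
    (hr : ∀ j ∈ Icc 1 n, (clampFun r j).isLeft = (clampFun r (j - 1)).isLeft) :
    (∃ r', r = Sum.inl ∘ r') ∨ ∃ r', r = Sum.inr ∘ r' := by
  have hconst : ∀ k ≤ n, (clampFun r k).isLeft = (r 0).isLeft := by
    intro k hk
    induction k with
    | zero => rfl
    | succ k ih => rw [hr (k + 1) (by simpa using hk), Nat.add_sub_cancel, ih (by omega)]
  have hfin (i) : (r i).isLeft = (r 0).isLeft := by
    rw [← hconst i (by omega), clampFun_of_le _ (by omega)]
  cases h0 : (r 0).isLeft
  · choose r' hr' using fun i => Sum.isRight_iff.1 (by simpa [h0] using hfin i)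
    exact .inr ⟨r', funext hr'⟩
  · choose r' hr' using fun i => Sum.isLeft_iff.1 ((hfin i).trans h0)
    exact .inl ⟨r', funext hr'⟩

theorem NWRegular.add {S S' : NestedWord Δ → K} (hS : NWRegular S) (hS' : NWRegular S') :
    NWRegular fun nw => S nw + S' nw := by
  obtain ⟨Q, _, ι, t, κ, rfl⟩ := nwRegular_iff.1 hS
  obtain ⟨Q', _, ι', t', κ', rfl⟩ := nwRegular_iff.1 hS'
  convert nwRegular_runSum (Sum.elim ι ι') (sumTr t t') (Sum.elim κ κ') using 2 with nw
  let e : (Fin (nw.len + 1) → Q) ⊕ (Fin (nw.len + 1) → Q') → Fin (nw.len + 1) → Q ⊕ Q' :=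
    Sum.elim (Sum.inl ∘ ·) (Sum.inr ∘ ·)
  have he : Function.Injective e := by
    rintro (r | r) (r' | r') h
    · exact congrArg _ (funext fun i => Sum.inl.inj (congrFun h i))
    · cases congrFun h 0
    · cases congrFun h 0
    · exact congrArg _ (funext fun i => Sum.inr.inj (congrFun h i))
  unfold runSum
  rw [← Fintype.sum_sumElim]
  refine Fintype.sum_of_injective e he _ _ (fun r hr => ?_) ?_
  · have : ∃ j ∈ Icc 1 nw.len, (clampFun r j).isLeft ≠ (clampFun r (j - 1)).isLeft := by
      by_contra! h
      rcases eq_inl_comp_or_eq_inr_comp h with ⟨r', rfl⟩ | ⟨r', rfl⟩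
      · exact hr ⟨.inl r', rfl⟩
      · exact hr ⟨.inr r', rfl⟩
    obtain ⟨j, hj, hne⟩ := this
    rw [prod_eq_zero hj (sumTr_eq_zero t t' _ _ _ hne), mul_zero, zero_mul]
  · rintro (r | r) <;> rfl

theorem NWRegular.prod_letter (g : Δ → K) :
    NWRegular fun nw => ∏ j ∈ Icc 1 nw.len, g (nw.letter j) := by
  convert nwRegular_runSum (fun _ : Unit => 1) (fun _ _ _ a _ => g a) (fun _ => 1) using 2 with nw
  simp [runSum, stepWeight]

end WeightedAutomata

section DeterministicAutomata

open Finset NestedWord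

variable {K Δ L Q T T' T'' : Type}

/-- The run of the deterministic automaton with initial state `q₀` and transition function `δ`. The
arguments of `δ` are those of the transition weights in `stepWeight`. -/
noncomputable def detRun (q₀ : Q) (δ : PosKind → Q → Q → Δ → Q) (nw : NestedWord Δ) : ℕ → Q
  | 0 => q₀
  | k + 1 => δ (nw.kind (k + 1)) (detRun q₀ δ nw k) (detRun q₀ δ nw (nw.back (k + 1)))
      (nw.letter (k + 1))
termination_by k => k
decreasing_by
  · omega
  · have := nw.back_le (k + 1)
    omega

/-- A recognizable step function: the value at `nw` depends only on the final state of the run of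
some deterministic finite automaton. -/
def IsRecStep (F : NestedWord Δ → T) : Prop :=
  ∃ (Q : Type) (_ : Finite Q) (q₀ : Q) (δ : PosKind → Q → Q → Δ → Q) (o : Q → T),
    ∀ nw, F nw = o (detRun q₀ δ nw nw.len)

theorem detRun_zero (q₀ : Q) (δ : PosKind → Q → Q → Δ → Q) (nw : NestedWord Δ) :
    detRun q₀ δ nw 0 = q₀ := by
  rw [detRun]

theorem detRun_succ (q₀ : Q) (δ : PosKind → Q → Q → Δ → Q) (nw : NestedWord Δ) (k : ℕ) :
    detRun q₀ δ nw (k + 1) =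
      δ (nw.kind (k + 1)) (detRun q₀ δ nw k) (detRun q₀ δ nw (nw.back (k + 1)))
        (nw.letter (k + 1)) := by
  rw [detRun]

theorem eq_detRun {q₀ : Q} {δ : PosKind → Q → Q → Δ → Q} {nw : NestedWord Δ} {n : ℕ} {ρ : ℕ → Q}
    (h0 : ρ 0 = q₀)
    (hs : ∀ k < n, ρ (k + 1) =
      δ (nw.kind (k + 1)) (ρ k) (ρ (nw.back (k + 1))) (nw.letter (k + 1))) :
    ∀ k ≤ n, ρ k = detRun q₀ δ nw k := by
  intro k
  induction k using Nat.strong_induction_on with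
  | _ k ih =>
    intro hk
    cases k with
    | zero => rw [h0, detRun_zero]
    | succ k =>
      have := nw.back_le (k + 1)
      rw [hs k (by omega), detRun_succ, ih k (by omega) (by omega), ih _ (by omega) (by omega)]

namespace IsRecStep

theorem of_run [Finite Q] {q₀ : Q} {δ : PosKind → Q → Q → Δ → Q} {ρ : NestedWord Δ → ℕ → Q}
    (h0 : ∀ nw, ρ nw 0 = q₀)
    (hs : ∀ nw k, k < nw.len → ρ nw (k + 1) =
      δ (nw.kind (k + 1)) (ρ nw k) (ρ nw (nw.back (k + 1))) (nw.letter (k + 1)))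
    (o : Q → T) : IsRecStep fun nw => o (ρ nw nw.len) :=
  ⟨Q, ‹_›, q₀, δ, o, fun nw => congrArg o (eq_detRun (h0 nw) (hs nw) _ le_rfl)⟩

theorem const (c : T) : IsRecStep fun _ : NestedWord Δ => c :=
  ⟨Unit, inferInstance, (), fun _ _ _ _ => (), fun _ => c, fun _ => rfl⟩

theorem map {F : NestedWord Δ → T} (hF : IsRecStep F) (g : T → T') :
    IsRecStep fun nw => g (F nw) := by
  obtain ⟨Q, _, q₀, δ, o, hF⟩ := hF
  exact ⟨Q, ‹_›, q₀, δ, g ∘ o, fun nw => congrArg g (hF nw)⟩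

theorem pi {I : Type} [Finite I] {F : I → NestedWord Δ → T} (hF : ∀ i, IsRecStep (F i)) :
    IsRecStep fun nw i => F i nw := by
  choose Q _ q₀ δ o hF using hF
  simp only [hF]
  exact of_run (Q := ∀ i, Q i) (δ := fun k p c a i => δ i k (p i) (c i) a)
    (ρ := fun nw k i => detRun (q₀ i) (δ i) nw k)
    (fun nw => funext fun i => detRun_zero ..) (fun nw k _ => funext fun i => detRun_succ ..)
    (fun q i => o i (q i))

theorem map₂ {F : NestedWord Δ → T} {G : NestedWord Δ → T'} (hF : IsRecStep F) (hG : IsRecStep G)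
    (g : T → T' → T'') : IsRecStep fun nw => g (F nw) (G nw) := by
  obtain ⟨Q, _, q₀, δ, o, hF⟩ := hF
  obtain ⟨Q', _, q₀', δ', o', hG⟩ := hG
  simp only [hF, hG]
  exact of_run (δ := fun k (p c : Q × Q') a => (δ k p.1 c.1 a, δ' k p.2 c.2 a))
    (ρ := fun nw k => (detRun q₀ δ nw k, detRun q₀' δ' nw k))
    (fun nw => congrArg₂ Prod.mk (detRun_zero ..) (detRun_zero ..))
    (fun nw k _ => congrArg₂ Prod.mk (detRun_succ ..) (detRun_succ ..))
    (fun q => g (o q.1) (o' q.2))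

theorem comap {F : NestedWord L → T} (hF : IsRecStep F) (f : Δ → L) :
    IsRecStep fun nw => F (nw.map f) := by
  obtain ⟨Q, _, q₀, δ, o, hF⟩ := hF
  simp only [hF, len_map]
  refine of_run (δ := fun k p c a => δ k p c (f a)) (ρ := fun nw => detRun q₀ δ (nw.map f))
    (fun nw => detRun_zero ..) (fun nw k hk => ?_) o
  rw [detRun_succ, letter_map f (by simpa using hk)]
  rfl

variable [CommSemiring K]

theorem nwRegular {F : NestedWord Δ → K} (hF : IsRecStep F) : NWRegular F := by
  classical
  obtain ⟨Q, _, q₀, δ, o, hF⟩ := hF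
  have := Fintype.ofFinite Q
  convert nwRegular_runSum (fun q => if q = q₀ then 1 else 0)
    (fun k p c a q => if q = δ k p c a then 1 else 0) o using 1
  funext nw
  rw [hF, runSum, sum_eq_single fun i : Fin (nw.len + 1) => detRun q₀ δ nw i]
  · rw [prod_eq_one]
    · simp [detRun_zero]
    intro j hj
    obtain ⟨k, rfl⟩ := Nat.exists_eq_add_of_le' (mem_Icc.1 hj).1
    have := nw.back_le (k + 1)
    rw [mem_Icc] at hj
    rw [stepWeight, clampFun_of_le _ (by omega), clampFun_of_le _ (by omega),
      clampFun_of_le _ (by omega)]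
    exact if_pos (detRun_succ ..)
  · intro r _ hr
    by_contra hne
    refine hr (funext fun i => ?_)
    have h0 : r 0 = q₀ := by
      by_contra h0
      simp [h0] at hne
    have hs : ∀ k < nw.len, clampFun r (k + 1) = δ (nw.kind (k + 1)) (clampFun r k)
        (clampFun r (nw.back (k + 1))) (nw.letter (k + 1)) := by
      intro k hk
      by_contra h
      exact hne (by rw [prod_eq_zero (i := k + 1) (by simpa using hk) (if_neg h)]; simp)
    rw [← eq_detRun (ρ := clampFun r) h0 hs i (by omega), clampFun_of_le _ (by omega)]
  · exact fun h => absurd (mem_univ _) h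

end IsRecStep

end DeterministicAutomata

section Determinization

open Finset Function NestedWord

section Marginal

variable {ι Q R : Type} [DecidableEq ι] [Fintype Q] [CommSemiring R]

/-- The sum of `f` over all values of the coordinates in `s`, the other coordinates being those of
`ρ`. -/
def marginal (s : Finset ι) (f : (ι → Q) → R) (ρ : ι → Q) : R :=
  ∑ v : s → Q, f (updateFinset ρ s v)

theorem marginal_empty (f : (ι → Q) → R) (ρ : ι → Q) : marginal ∅ f ρ = f ρ := by
  simp [marginal, updateFinset_empty]

theorem marginal_singleton (i : ι) (f : (ι → Q) → R) (ρ : ι → Q) :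
    marginal {i} f ρ = ∑ x, f (update ρ i x) := by
  rw [marginal, ← (Equiv.funUnique ({i} : Finset ι) Q).symm.sum_comp]
  exact sum_congr rfl fun x _ => by rw [updateFinset_singleton]; rfl

theorem marginal_union {s t : Finset ι} (hst : Disjoint s t) (f : (ι → Q) → R) (ρ : ι → Q) :
    marginal (s ∪ t) f ρ = marginal s (marginal t f) ρ := by
  simp only [marginal]
  rw [← (Equiv.piFinsetUnion (fun _ => Q) hst).sum_comp, Fintype.sum_prod_type]
  simp only [updateFinset_updateFinset hst]

theorem marginal_congr {s : Finset ι} {f g : (ι → Q) → R} {ρ : ι → Q}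
    (h : ∀ ρ', (∀ i ∉ s, ρ' i = ρ i) → f ρ' = g ρ') : marginal s f ρ = marginal s g ρ :=
  sum_congr rfl fun _ _ => h _ fun i hi => by simp [updateFinset, hi]

theorem marginal_mul_left (s : Finset ι) (c : R) (f : (ι → Q) → R) (ρ : ι → Q) :
    marginal s (fun ρ' => c * f ρ') ρ = c * marginal s f ρ := by
  simp only [marginal, mul_sum]

theorem sum_clampFun {n : ℕ} {f : (ℕ → Q) → R} (hf : ∀ ρ ρ', (∀ j ≤ n, ρ j = ρ' j) → f ρ = f ρ')
    (ρ : ℕ → Q) : ∑ r : Fin (n + 1) → Q, f (clampFun r) = marginal (range (n + 1)) f ρ := by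
  let e : (Fin (n + 1) → Q) ≃ (range (n + 1) → Q) :=
    { toFun r i := r ⟨i, mem_range.1 i.2⟩
      invFun v i := v ⟨i, mem_range.2 i.2⟩ }
  refine Fintype.sum_equiv e _ _ fun r => hf _ _ fun j hj => ?_
  rw [clampFun_of_le _ hj, updateFinset, dif_pos (mem_range.2 (by omega))]
  rfl

end Marginal

variable {Δ Q R : Type} [CommSemiring R] {t : PosKind → Q → Q → Δ → Q → R}
  {nw : NestedWord Δ}

theorem prod_stepWeight_congr {σ k : ℕ} {ρ ρ' : ℕ → Q} (h : ∀ j ≤ k, ρ j = ρ' j) :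
    ∏ j ∈ Ioc σ k, stepWeight t nw ρ j = ∏ j ∈ Ioc σ k, stepWeight t nw ρ' j := by
  refine prod_congr rfl fun j hj => ?_
  have := nw.back_le j
  rw [mem_Ioc] at hj
  rw [stepWeight, h _ (by omega), h _ (by omega), h _ (by omega), stepWeight]

variable [Fintype Q]

/-- The entry of `M` at `p`, `q` is the total weight of the partial runs from state `p` at index `σ`
to state `q` at index `k`. Testing against a vector `h` of final weights avoids fixing `q`. -/
def IsSegmentMatrix (t : PosKind → Q → Q → Δ → Q → R) (nw : NestedWord Δ) (σ k : ℕ)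
    (M : Matrix Q Q R) : Prop :=
  ∀ (h : Q → R) (ρ : ℕ → Q),
    marginal (Ioc σ k) (fun ρ' => (∏ j ∈ Ioc σ k, stepWeight t nw ρ' j) * h (ρ' k)) ρ =
      (M.mulVec h) (ρ σ)

theorem marginal_Ioc_succ {σ k : ℕ} (hσ : σ ≤ k) (h : Q → R) (ρ : ℕ → Q) :
    marginal (Ioc σ (k + 1))
        (fun ρ' => (∏ j ∈ Ioc σ (k + 1), stepWeight t nw ρ' j) * h (ρ' (k + 1))) ρ =
      marginal (Ioc σ k) (fun ρ' => (∏ j ∈ Ioc σ k, stepWeight t nw ρ' j) *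
        ∑ x, t (nw.kind (k + 1)) (ρ' k) (ρ' (nw.back (k + 1))) (nw.letter (k + 1)) x * h x) ρ := by
  have hIoc : Ioc σ (k + 1) = Ioc σ k ∪ {k + 1} := by
    ext
    simp only [mem_Ioc, mem_union, mem_singleton]
    omega
  have hb := nw.back_le (k + 1)
  rw [hIoc, marginal_union (by simp), ← hIoc]
  refine marginal_congr fun ρ' _ => ?_
  rw [marginal_singleton, mul_sum]
  refine sum_congr rfl fun x _ => ?_
  rw [prod_Ioc_succ_top hσ, prod_stepWeight_congr (ρ' := ρ') fun j hj =>
    update_of_ne (by omega) _ _, mul_assoc]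
  rw [stepWeight, Nat.add_sub_cancel, update_self, update_of_ne (by omega),
    update_of_ne (by omega)]

namespace IsSegmentMatrix

theorem refl [DecidableEq Q] (k : ℕ) : IsSegmentMatrix t nw k k 1 := fun h ρ => by
  simp [marginal_empty]

theorem succ {σ k : ℕ} {M : Matrix Q Q R} (hσ : σ ≤ k) (hM : IsSegmentMatrix t nw σ k M)
    (hk : nw.kind (k + 1) ≠ .ret) :
    IsSegmentMatrix t nw σ (k + 1)
      (M * Matrix.of fun p q => t (nw.kind (k + 1)) p p (nw.letter (k + 1)) q) := fun h ρ => by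
  rw [marginal_Ioc_succ hσ, back_of_kind_ne_ret hk, ← Matrix.mulVec_mulVec, ← hM]
  rfl

theorem succ_of_ret {σ k : ℕ} {M₀ M : Matrix Q Q R} (hσ : σ ≤ nw.back (k + 1))
    (hM₀ : IsSegmentMatrix t nw σ (nw.back (k + 1)) M₀)
    (hM : IsSegmentMatrix t nw (nw.back (k + 1)) k M) :
    IsSegmentMatrix t nw σ (k + 1) (M₀ * Matrix.of fun z q =>
      (M * Matrix.of fun x y => t (nw.kind (k + 1)) x z (nw.letter (k + 1)) y) z q) := fun h ρ => by
  have hb : nw.back (k + 1) ≤ k := nw.back_le (k + 1)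
  rw [marginal_Ioc_succ (hσ.trans hb), ← Ioc_union_Ioc_eq_Ioc hσ hb,
    marginal_union (Ioc_disjoint_Ioc_of_le le_rfl), ← Matrix.mulVec_mulVec, ← hM₀]
  refine marginal_congr fun ρ₁ _ => ?_
  have hreturn := hM (fun x => ∑ y,
    t (nw.kind (k + 1)) x (ρ₁ (nw.back (k + 1))) (nw.letter (k + 1)) y * h y) ρ₁
  trans (∏ j ∈ Ioc σ (nw.back (k + 1)), stepWeight t nw ρ₁ j) *
    (M.mulVec fun x => ∑ y,
      t (nw.kind (k + 1)) x (ρ₁ (nw.back (k + 1))) (nw.letter (k + 1)) y * h y)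
        (ρ₁ (nw.back (k + 1)))
  · rw [← hreturn, ← marginal_mul_left]
    refine marginal_congr fun ρ₂ hρ₂ => ?_
    have hagree : ∀ j ≤ nw.back (k + 1), ρ₂ j = ρ₁ j := fun j hj => hρ₂ j (by simp; omega)
    rw [Ioc_union_Ioc_eq_Ioc hσ hb, ← prod_Ioc_consecutive _ hσ hb, prod_stepWeight_congr hagree,
      hagree _ le_rfl, mul_assoc]
  · congr 1
    exact congrFun (Matrix.mulVec_mulVec h M _) _

end IsSegmentMatrix

/-- The transition function of the determinization. A state is the matrix of the segment that starts
in front of the innermost open call, or at the beginning of the word if there is none. -/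
def detStep (t : PosKind → Q → Q → Δ → Q → R) :
    PosKind → Matrix Q Q R → Matrix Q Q R → Δ → Matrix Q Q R
  | .call, _, _, a => Matrix.of fun p q => t .call p p a q
  | .int, M, _, a => M * Matrix.of fun p q => t .int p p a q
  | .ret, M, M₀, a => M₀ * Matrix.of fun z q => (M * Matrix.of fun x y => t .ret x z a y) z q

theorem isSegmentMatrix_detRun [DecidableEq Q] (k : ℕ) :
    IsSegmentMatrix t nw (nw.innermostCall k - 1) k (detRun 1 (detStep t) nw k) := by
  induction k using Nat.strong_induction_on with
  | _ k ih =>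
    cases k with
    | zero => simpa [innermostCall_zero, detRun_zero] using .refl 0
    | succ k =>
      have hb := nw.back_le (k + 1)
      have hσ := nw.innermostCall_le k
      rw [detRun_succ]
      cases hk : nw.kind (k + 1)
      · have := IsSegmentMatrix.succ le_rfl (.refl (t := t) (nw := nw) k) (by simp [hk])
        rw [innermostCall_of_call hk, Nat.add_sub_cancel]
        rwa [hk, one_mul] at this
      · have := IsSegmentMatrix.succ (by omega) (ih k (by omega)) (by simp [hk])
        rwa [hk, ← innermostCall_of_int hk] at this
      · have hrel := rel_back_of_kind_eq_ret hk
        have hσ' := nw.innermostCall_le (nw.back (k + 1))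
        have hM := ih k (by omega)
        rw [innermostCall_eq_of_rel_succ hrel, Nat.add_sub_cancel] at hM
        rw [innermostCall_succ_of_rel_succ hrel, Nat.add_sub_cancel]
        have := IsSegmentMatrix.succ_of_ret (by omega) (ih _ (by omega)) hM
        rwa [hk] at this

theorem runSum_eq_detRun [DecidableEq Q] (ι κ : Q → R) (nw : NestedWord Δ) :
    runSum ι t κ nw = ι ⬝ᵥ (detRun 1 (detStep t) nw nw.len).mulVec κ := by
  rcases isEmpty_or_nonempty Q with _ | ⟨⟨q⟩⟩
  · simp [runSum]
  have hM := isSegmentMatrix_detRun (t := t) (nw := nw) nw.len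
  rw [innermostCall_len] at hM
  let f (ρ : ℕ → Q) : R := ι (ρ 0) * ((∏ j ∈ Ioc 0 nw.len, stepWeight t nw ρ j) * κ (ρ nw.len))
  have hf (ρ ρ' : ℕ → Q) (h : ∀ j ≤ nw.len, ρ j = ρ' j) : f ρ = f ρ' := by
    simp only [f, h 0 (Nat.zero_le _), h _ le_rfl, prod_stepWeight_congr h]
  have hrange : range (nw.len + 1) = {0} ∪ Ioc 0 nw.len := by
    ext j
    simp only [mem_range, mem_union, mem_singleton, mem_Ioc]
    omega
  calc runSum ι t κ nw = ∑ r : Fin (nw.len + 1) → Q, f (clampFun r) :=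
        sum_congr rfl fun r _ => by
          simp only [f, clampFun_of_le _ le_rfl, mul_assoc]
          rfl
    _ = ∑ p, marginal (Ioc 0 nw.len) f (update (fun _ => q) 0 p) := by
        rw [sum_clampFun hf fun _ => q, hrange, marginal_union (by simp), marginal_singleton]
    _ = ∑ p, ι p * ((detRun 1 (detStep t) nw nw.len).mulVec κ) p := sum_congr rfl fun p _ => by
        rw [← update_self 0 p fun _ => q, ← hM κ, ← marginal_mul_left]
        refine marginal_congr fun ρ hρ => ?_
        simp [f, hρ 0 (by simp)]

theorem NWRegular.isRecStep [Finite R] {S : NestedWord Δ → R} (hS : NWRegular S) :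
    IsRecStep S := by
  classical
  obtain ⟨Q, _, ι, t, κ, rfl⟩ := nwRegular_iff.1 hS
  exact ⟨_, inferInstance, 1, detStep t, fun M => ι ⬝ᵥ M.mulVec κ, runSum_eq_detRun ι κ⟩

end Determinization

section RecognizablePredicates

open Finset NestedWord

variable {Δ Q : Type}

namespace IsRecStep

theorem exists_step [Finite Q] {q₀ : Q} {δ : PosKind → Q → Q → Δ → Q} {ρ : NestedWord Δ → ℕ → Q}
    (h0 : ∀ nw, ρ nw 0 = q₀)
    (hs : ∀ nw k, k < nw.len → ρ nw (k + 1) =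
      δ (nw.kind (k + 1)) (ρ nw k) (ρ nw (nw.back (k + 1))) (nw.letter (k + 1)))
    (P : PosKind → Q → Δ → Prop) :
    IsRecStep fun nw => ∃ j ∈ Icc 1 nw.len, P (nw.kind j) (ρ nw (j - 1)) (nw.letter j) := by
  refine of_run
    (δ := fun k (p c : Q × Prop) a => (δ k p.1 c.1 a, p.2 ∨ P k p.1 a))
    (ρ := fun nw k =>
      (ρ nw k, ∃ j ∈ Icc 1 k, P (nw.kind j) (ρ nw (j - 1)) (nw.letter j)))
    (q₀ := (q₀, False)) (fun nw => Prod.ext (h0 nw) (by simp))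
    (fun nw k hk => Prod.ext (hs nw k hk) (propext ?_)) Prod.snd
  simp [← insert_Icc_right_eq_Icc_add_one, or_comm]

theorem exists_letter (P : Δ → Prop) :
    IsRecStep fun nw => ∃ j ∈ Icc 1 nw.len, P (nw.letter j) :=
  exists_step (δ := fun _ _ _ _ => ()) (ρ := fun _ _ => ()) (fun _ => rfl) (fun _ _ _ => rfl)
    fun _ _ a => P a

theorem exists_lt_letter (P P' : Δ → Prop) : IsRecStep fun nw =>
    ∃ j ∈ Icc 1 nw.len, (∃ i ∈ Icc 1 (j - 1), P (nw.letter i)) ∧ P' (nw.letter j) := by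
  refine exists_step (δ := fun _ p _ a => p ∨ P a)
    (ρ := fun nw k => ∃ i ∈ Icc 1 k, P (nw.letter i)) (q₀ := False) (by simp)
    (fun nw k _ => propext ?_) fun _ p a => p ∧ P' a
  simp [← insert_Icc_right_eq_Icc_add_one, or_comm]

/-- The matching call of a return is visible in a run as the innermost open call. -/
theorem exists_rel_letter (P P' : Δ → Prop) :
    IsRecStep fun nw => ∃ i j, nw.rel i j ∧ P (nw.letter i) ∧ P' (nw.letter j) := by
  convert exists_step (Δ := Δ) (q₀ := False)
    (ρ := fun nw k => nw.innermostCall k ≠ 0 ∧ P (nw.letter (nw.innermostCall k)))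
    (δ := fun k p c a => match k with | .call => P a | .int => p | .ret => c)
    (fun nw => by simp [innermostCall_zero]) (fun nw k _ => ?_)
    (fun k p a => k = .ret ∧ p ∧ P' a) using 2 with nw
  · constructor
    · rintro ⟨i, j, h, hi, hj⟩
      have := rel_bounds h
      obtain ⟨k, rfl⟩ := Nat.exists_eq_add_of_le' (this.1.trans this.2.1.le)
      refine ⟨k + 1, by simp; omega, kind_eq_ret_iff.2 ⟨i, h⟩, ?_, hj⟩
      rw [Nat.add_sub_cancel, innermostCall_eq_of_rel_succ h]
      exact ⟨by omega, hi⟩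
    · rintro ⟨j, hj, hr, ⟨-, hi⟩, hj'⟩
      obtain ⟨k, rfl⟩ := Nat.exists_eq_add_of_le' (mem_Icc.1 hj).1
      have h := rel_back_of_kind_eq_ret hr
      rw [Nat.add_sub_cancel, innermostCall_eq_of_rel_succ h] at hi
      exact ⟨_, _, h, hi, hj'⟩
  · cases hk : nw.kind (k + 1)
    · simp [innermostCall_of_call hk]
    · simp only [innermostCall_of_int hk]
    · simp only [innermostCall_succ_of_rel_succ (rel_back_of_kind_eq_ret hk), Nat.add_sub_cancel]

theorem existsUnique_letter (P : Δ → Prop) :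
    IsRecStep fun nw => ∃! j, j ∈ Icc 1 nw.len ∧ P (nw.letter j) := by
  convert (exists_letter P).map₂ (exists_lt_letter P P) (fun p q => p ∧ ¬ q) using 2 with nw
  constructor
  · rintro ⟨j, hj, huniq⟩
    refine ⟨⟨j, hj⟩, fun ⟨k, hk, ⟨i, hi, hPi⟩, hPk⟩ => ?_⟩
    simp only [mem_Icc] at hk hi huniq
    have := huniq k ⟨by omega, hPk⟩
    have := huniq i ⟨by omega, hPi⟩
    omega
  · rintro ⟨⟨j, hj, hPj⟩, hlt⟩
    refine ⟨j, ⟨hj, hPj⟩, fun k ⟨hk, hPk⟩ => ?_⟩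
    by_contra hne
    rw [mem_Icc] at hj hk
    rcases Nat.lt_or_gt_of_ne hne with h | h
    · exact hlt ⟨j, mem_Icc.2 hj, ⟨k, mem_Icc.2 (by omega), hPk⟩, hPj⟩
    · exact hlt ⟨k, mem_Icc.2 hk, ⟨j, mem_Icc.2 (by omega), hPj⟩, hPk⟩

end IsRecStep

end RecognizablePredicates

section Quantification

open Finset NestedWord

variable {K Δ B : Type} [CommSemiring K]

theorem AddLocallyFinite.of_finite [Finite K] : AddLocallyFinite K := fun _ => Set.toFinite _

theorem AddLocallyFinite.finite_natCast (hK : AddLocallyFinite K) :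
    Finite (Nat.castRingHom K).rangeS := by
  refine ((hK {1}).subset ?_).to_subtype
  rintro _ ⟨n, rfl⟩
  rw [coe_singleton]
  exact AddSubmonoid.mem_closure_singleton.2 ⟨n, by simp⟩

theorem exists_mem_Icc_one_iff {n : ℕ} {P : ℕ → Prop} :
    (∃ j ∈ Icc 1 n, P j) ↔ ∃ i : Fin n, P (i + 1) := by
  constructor
  · rintro ⟨j, hj, h⟩
    obtain ⟨k, rfl⟩ := Nat.exists_eq_add_of_le' (mem_Icc.1 hj).1
    exact ⟨⟨k, by simpa using hj⟩, h⟩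
  · exact fun ⟨i, h⟩ => ⟨i + 1, by simp, h⟩

theorem sum_eq_sum_mul_sum_ite [DecidableEq B] [Fintype B] {I : Type} (s : Finset I) (f : I → B)
    (o : B → K) : ∑ i ∈ s, o (f i) = ∑ b, o b * ∑ i ∈ s, if f i = b then 1 else 0 := by
  simp only [mul_sum, mul_ite, mul_one, mul_zero]
  rw [sum_comm]
  simp

/-- The number of annotations that lead to a given final state takes only finitely many values in
`K`, since it lies in the subsemiring generated by `1`. -/
theorem IsRecStep.sum_annotate [Fintype B] (hK : AddLocallyFinite K)
    {F : NestedWord (Δ × B) → K} (hF : IsRecStep F) :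
    IsRecStep fun nw => ∑ u : Fin nw.len → B, F (nw.annotate (nw.extend u)) := by
  classical
  obtain ⟨Q, _, q₀, δ, o, hF⟩ := hF
  have := Fintype.ofFinite Q
  have := hK.finite_natCast
  have hcount (q : Q) : IsRecStep fun nw : NestedWord Δ => ∑ u : Fin nw.len → B,
      if detRun q₀ δ (nw.annotate (nw.extend u)) nw.len = q then (1 : K) else 0 := by
    have hq : IsRecStep fun w : NestedWord (Δ × B) =>
        if detRun q₀ δ w w.len = q then (1 : (Nat.castRingHom K).rangeS) else 0 :=
      ⟨Q, ‹_›, q₀, δ, fun p => if p = q then 1 else 0, fun _ => rfl⟩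
    convert hq.nwRegular.sum_annotate.isRecStep.map (Nat.castRingHom K).rangeS.subtype using 2
    simp only [map_sum, apply_ite, map_one, map_zero, len_annotate]
  simp only [hF, len_annotate, sum_eq_sum_mul_sum_ite univ (fun _ => detRun q₀ δ _ _)]
  exact (IsRecStep.pi hcount).map fun c => ∑ q, o q * c q

open Classical in
/-- The set of the positions among `1, …, n` that carry a mark, where the marks `u` are
indexed from `0`. -/
noncomputable def markedSet {n : ℕ} (u : Fin n → Prop) : Finset ℕ :=
  (univ.filter u).image fun i : Fin n => (i : ℕ) + 1

theorem succ_mem_markedSet {n : ℕ} {u : Fin n → Prop} (i : Fin n) :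
    (i : ℕ) + 1 ∈ markedSet u ↔ u i := by
  simp [markedSet, Fin.val_inj]

theorem sum_powerset_Icc_one {M : Type*} [AddCommMonoid M] (n : ℕ) (g : Finset ℕ → M) :
    ∑ T ∈ (Icc 1 n).powerset, g T = ∑ u : Fin n → Prop, g (markedSet u) := by
  have hsub (u : Fin n → Prop) : markedSet u ⊆ Icc 1 n := by
    intro j hj
    obtain ⟨i, -, rfl⟩ := mem_image.1 hj
    exact mem_Icc.2 ⟨Nat.le_add_left _ _, i.isLt⟩
  refine (sum_bij (fun u _ => markedSet u) (fun u _ => mem_powerset.2 (hsub u))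
    (fun u _ v _ h => ?_) (fun T hT => ?_) fun _ _ => rfl).symm
  · funext i
    rw [← succ_mem_markedSet (u := u) i, h, succ_mem_markedSet]
  · refine ⟨fun i => (i : ℕ) + 1 ∈ T, mem_univ _, ext fun j => ?_⟩
    by_cases hj : j ∈ Icc 1 n
    · obtain ⟨k, rfl⟩ := Nat.exists_eq_add_of_le' (mem_Icc.1 hj).1
      exact succ_mem_markedSet (⟨k, (mem_Icc.1 hj).2⟩ : Fin n)
    · exact iff_of_false (fun h => hj (hsub _ h)) fun h => hj (mem_powerset.1 hT h)

theorem sum_powerset_annotate (nw : NestedWord Δ) (F : NestedWord (Δ × Prop) → K) :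
    ∑ T ∈ (Icc 1 nw.len).powerset, F (nw.annotate (· ∈ T)) =
      ∑ u : Fin nw.len → Prop, F (nw.annotate (nw.extend u)) := by
  rw [sum_powerset_Icc_one]
  refine sum_congr rfl fun u _ => congrArg F (annotate_congr fun j hj => propext ?_)
  obtain ⟨k, rfl⟩ := Nat.exists_eq_add_of_le' (mem_Icc.1 hj).1
  have hk : k < nw.len := (mem_Icc.1 hj).2
  exact (succ_mem_markedSet ⟨k, hk⟩).trans (Eq.to_iff (nw.extend_succ u ⟨k, hk⟩).symm)

theorem NWRegular.sum_powerset {F : NestedWord (Δ × Prop) → K} (hF : NWRegular F) :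
    NWRegular fun nw => ∑ T ∈ (Icc 1 nw.len).powerset, F (nw.annotate (· ∈ T)) := by
  simpa only [sum_powerset_annotate] using hF.sum_annotate

theorem IsRecStep.sum_powerset (hK : AddLocallyFinite K) {F : NestedWord (Δ × Prop) → K}
    (hF : IsRecStep F) :
    IsRecStep fun nw => ∑ T ∈ (Icc 1 nw.len).powerset, F (nw.annotate (· ∈ T)) := by
  simpa only [sum_powerset_annotate] using hF.sum_annotate hK

open Classical in
/-- The value of `F` if exactly one position is marked, and `0` otherwise. -/
noncomputable def uniquelyMarked (F : NestedWord (Δ × Prop) → K) (nw : NestedWord (Δ × Prop)) : K :=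
  if ∃! j, j ∈ Icc 1 nw.len ∧ (nw.letter j).2 then F nw else 0

theorem sum_powerset_uniquelyMarked (nw : NestedWord Δ) (F : NestedWord (Δ × Prop) → K) :
    ∑ T ∈ (Icc 1 nw.len).powerset, uniquelyMarked F (nw.annotate (· ∈ T)) =
      ∑ i ∈ Icc 1 nw.len, F (nw.annotate (· = i)) := by
  classical
  have hiff : ∀ T ∈ (Icc 1 nw.len).powerset, (∃! j, j ∈ Icc 1 (nw.annotate (· ∈ T)).len ∧
      ((nw.annotate (· ∈ T)).letter j).2) ↔ T.card = 1 := fun T hT => by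
    rw [card_eq_one_iff_existsUnique]
    refine existsUnique_congr fun j => ?_
    rw [len_annotate]
    refine ⟨fun ⟨hj, h⟩ => ?_, fun h => ?_⟩
    · rwa [letter_annotate _ hj] at h
    · have hj := mem_powerset.1 hT h
      exact ⟨hj, by rwa [letter_annotate _ hj]⟩
  simp only [uniquelyMarked]
  rw [sum_congr rfl fun T hT => by rw [if_congr (hiff T hT) rfl rfl], ← sum_filter,
    ← powersetCard_eq_filter, powersetCard_one, sum_map]
  simp

theorem NWRegular.sum_pos {F : NestedWord (Δ × Prop) → K} (hF : NWRegular F) :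
    NWRegular fun nw => ∑ i ∈ Icc 1 nw.len, F (nw.annotate (· = i)) := by
  classical
  simp only [← sum_powerset_uniquelyMarked]
  have hunique := (IsRecStep.existsUnique_letter (Δ := Δ × Prop) Prod.snd).map
    fun p => if p then (1 : K) else 0
  refine NWRegular.sum_powerset ?_
  convert hunique.nwRegular.mul hF using 2 with nw
  rw [uniquelyMarked, ite_mul, one_mul, zero_mul]

theorem sum_ite_ne_zero {R I : Type} [CommSemiring R] [PartialOrder R] [CanonicallyOrderedAdd R]
    [Nontrivial R] {s : Finset I} {p : I → Prop} [DecidablePred p] :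
    (∑ i ∈ s, if p i then (1 : R) else 0) ≠ 0 ↔ ∃ i ∈ s, p i := by
  rw [Ne, sum_eq_zero_iff]
  simp

namespace IsRecStep

theorem sum_pos (hK : AddLocallyFinite K) {F : NestedWord (Δ × Prop) → K} (hF : IsRecStep F) :
    IsRecStep fun nw => ∑ i ∈ Icc 1 nw.len, F (nw.annotate (· = i)) := by
  classical
  simp only [← sum_powerset_uniquelyMarked]
  exact ((existsUnique_letter Prod.snd).map₂ hF fun p x => if p then x else 0).sum_powerset hK

/-- The ideals of a field form the Boolean semiring `{⊥, ⊤}`, in which a sum of indicators is an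
existential quantifier. -/
theorem exists_powerset {P : NestedWord (Δ × Prop) → Prop} (hP : IsRecStep P) :
    IsRecStep fun nw => ∃ T ∈ (Icc 1 nw.len).powerset, P (nw.annotate (· ∈ T)) := by
  classical
  simp only [← sum_ite_ne_zero (R := Ideal (ZMod 2))]
  exact ((hP.map fun p => if p then 1 else 0).sum_powerset .of_finite).map (· ≠ 0)

theorem exists_pos {P : NestedWord (Δ × Prop) → Prop} (hP : IsRecStep P) :
    IsRecStep fun nw => ∃ i ∈ Icc 1 nw.len, P (nw.annotate (· = i)) := by
  classical
  simp only [← sum_ite_ne_zero (R := Ideal (ZMod 2))]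
  exact ((hP.map fun p => if p then 1 else 0).sum_pos .of_finite).map (· ≠ 0)

theorem exists_wrong_guess [Finite B] {G : NestedWord (Δ × Prop) → B} (hG : IsRecStep G) :
    ∃ wrong : NestedWord (Δ × B) → Prop, IsRecStep wrong ∧ ∀ (nw : NestedWord Δ) (u : ℕ → B),
      wrong (nw.annotate u) ↔ ∃ i ∈ Icc 1 nw.len, u i ≠ G (nw.annotate (· = i)) := by
  let wrongAtMark (w : NestedWord ((Δ × B) × Prop)) : Prop :=
    ¬ ∃ j ∈ Icc 1 w.len, (w.letter j).2 ∧ (w.letter j).1.2 = G (w.map fun a => (a.1.1, a.2))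
  have hwrong : IsRecStep wrongAtMark :=
    (pi fun b => exists_letter fun a : (Δ × B) × Prop => a.2 ∧ a.1.2 = b).map₂
      (hG.comap fun a => (a.1.1, a.2)) fun p b => ¬ p b
  refine ⟨_, hwrong.exists_pos, fun nw u => ?_⟩
  rw [len_annotate]
  refine exists_congr fun i => and_congr_right fun hi => not_congr ?_
  have hannotate : (nw.annotate u).annotate (· = i) =
      nw.relabel fun j => ((nw.letter j, u j), j = i) := annotate_relabel ..
  rw [hannotate, map_relabel, len_relabel]
  constructor
  · rintro ⟨j, hj, hmark, hstate⟩
    rw [letter_relabel _ hj] at hmark hstate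
    obtain rfl : j = i := hmark
    exact hstate
  · exact fun h => ⟨i, hi, by rw [letter_relabel _ hi], by rwa [letter_relabel _ hi]⟩

/-- Guess the final states of `F` for all marks; a wrong guess is recognizable, and the product over
the guesses is computed by a one-state automaton. -/
theorem prod_pos {F : NestedWord (Δ × Prop) → K} (hF : IsRecStep F) :
    NWRegular fun nw => ∏ i ∈ Icc 1 nw.len, F (nw.annotate (· = i)) := by
  classical
  obtain ⟨Q, _, q₀, δ, o, hF⟩ := hF
  have := Fintype.ofFinite Q
  let G (w : NestedWord (Δ × Prop)) : Q := detRun q₀ δ w w.len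
  obtain ⟨wrong, hwrong, hwrong_iff⟩ :=
    exists_wrong_guess (G := G) ⟨Q, ‹_›, q₀, δ, id, fun _ => rfl⟩
  have hgood := (hwrong.map fun p => if p then (0 : K) else 1).nwRegular.mul
    (NWRegular.prod_letter fun a : Δ × Q => o a.2)
  convert hgood.sum_annotate using 2 with nw
  let g (i : Fin nw.len) : Q := G (nw.annotate (· = (i : ℕ) + 1))
  simp only [hwrong_iff, len_annotate, exists_mem_Icc_one_iff]
  rw [sum_eq_single g]
  · rw [if_neg, one_mul, prod_Icc_one_eq_prod_fin, prod_Icc_one_eq_prod_fin]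
    · refine prod_congr rfl fun i _ => ?_
      rw [letter_annotate _ (by simp), extend_succ]
      exact hF _
    · simp [extend_succ, g]
  · intro u _ hu
    rw [if_pos, zero_mul]
    obtain ⟨i, hi⟩ := Function.ne_iff.1 hu
    exact ⟨i, by rwa [extend_succ]⟩
  · exact fun h => absurd (mem_univ _) h

end IsRecStep

open Classical in
theorem NWRegular.annotate_first {F : NestedWord (Δ × Prop) → K} (hF : NWRegular F) :
    NWRegular fun nw => F (nw.annotate (· = 1)) := by
  have hfirst := (IsRecStep.exists_lt_letter (Δ := Δ × Prop) (fun a => ¬ a.2) Prod.snd).map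
    fun p => if p then (0 : K) else 1
  convert (hfirst.nwRegular.mul hF).sum_pos using 2 with nw
  have h1 : 1 ∈ Icc 1 nw.len := mem_Icc.2 ⟨le_rfl, nw.len_pos⟩
  simp only [len_annotate]
  rw [sum_eq_single 1]
  · rw [if_neg, one_mul]
    rintro ⟨j, hj, ⟨i, hi, -⟩, hmark⟩
    rw [letter_annotate _ hj] at hmark
    simp [show j = 1 from hmark] at hi
  · intro i hi hne
    rw [if_pos, zero_mul]
    have : 1 ∈ Icc 1 (i - 1) := by rw [mem_Icc] at hi ⊢; omega
    refine ⟨i, hi, ⟨1, this, ?_⟩, ?_⟩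
    · rw [letter_annotate _ h1]
      exact hne.symm
    · rw [letter_annotate _ hi]
  · exact fun h => absurd h1 h

end Quantification

section Assignments

open Finset Function NestedWord

/-- A letter together with the sets of first-order and second-order variables that mark it. -/
structure MarkedLetter (Δ : Type) : Type where
  letter : Δ
  pos : ℕ → Prop
  sets : ℕ → Prop

variable {Δ T T' T'' : Type}

namespace MarkedLetter

/-- Let the additional mark replace the marks of the first-order variable `x`. -/
def setPos (x : ℕ) (a : MarkedLetter Δ × Prop) : MarkedLetter Δ :=
  { a.1 with pos := update a.1.pos x a.2 }

/-- Let the additional mark replace the marks of the second-order variable `X`. -/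
def setSet (X : ℕ) (a : MarkedLetter Δ × Prop) : MarkedLetter Δ :=
  { a.1 with sets := update a.1.sets X a.2 }

end MarkedLetter

namespace NestedWord

/-- The encoding of a nested word with an assignment as a nested word over marked letters. -/
def encode (nw : NestedWord Δ) (γ1 : ℕ → ℕ) (γ2 : ℕ → Finset ℕ) : NestedWord (MarkedLetter Δ) :=
  nw.relabel fun j => ⟨nw.letter j, fun x => j = γ1 x, fun X => j ∈ γ2 X⟩

variable (nw : NestedWord Δ) (γ1 : ℕ → ℕ) (γ2 : ℕ → Finset ℕ)

@[simp] theorem len_encode : (nw.encode γ1 γ2).len = nw.len := len_relabel _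

theorem encode_update_pos (x i : ℕ) : nw.encode (update γ1 x i) γ2 =
    ((nw.encode γ1 γ2).annotate (· = i)).map (.setPos x) := by
  rw [encode, encode, annotate_relabel, map_relabel]
  refine relabel_congr fun j _ => congrArg (MarkedLetter.mk _ · _) (funext fun y => ?_)
  by_cases h : y = x <;> simp [update, h]

theorem encode_update_set (X : ℕ) (U : Finset ℕ) : nw.encode γ1 (update γ2 X U) =
    ((nw.encode γ1 γ2).annotate (· ∈ U)).map (.setSet X) := by
  rw [encode, encode, annotate_relabel, map_relabel]
  refine relabel_congr fun j _ => congrArg (MarkedLetter.mk _ _) (funext fun Y => ?_)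
  by_cases h : Y = X <;> simp [update, h]

end NestedWord

/-- The values of `G` are those of some `F` in the class `C` at the encodings. First-order variables
that do not denote a position leave no mark, so their values are excluded. -/
def EncodedBy (C : (NestedWord (MarkedLetter Δ) → T) → Prop)
    (G : NestedWord Δ → (ℕ → ℕ) → (ℕ → Finset ℕ) → T) : Prop :=
  ∃ F, C F ∧ ∀ nw γ1 γ2, (∀ x, γ1 x ∈ Icc 1 nw.len) → G nw γ1 γ2 = F (nw.encode γ1 γ2)

namespace EncodedBy

variable {C : (NestedWord (MarkedLetter Δ) → T) → Prop}
  {C' : (NestedWord (MarkedLetter Δ) → T') → Prop}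
  {C'' : (NestedWord (MarkedLetter Δ) → T'') → Prop}
  {G : NestedWord Δ → (ℕ → ℕ) → (ℕ → Finset ℕ) → T}
  {G' : NestedWord Δ → (ℕ → ℕ) → (ℕ → Finset ℕ) → T'}

theorem congr {H : NestedWord Δ → (ℕ → ℕ) → (ℕ → Finset ℕ) → T} (hG : EncodedBy C G)
    (h : ∀ nw γ1 γ2, (∀ x, γ1 x ∈ Icc 1 nw.len) → H nw γ1 γ2 = G nw γ1 γ2) : EncodedBy C H := by
  obtain ⟨F, hF, hGF⟩ := hG
  exact ⟨F, hF, fun nw γ1 γ2 hγ => (h nw γ1 γ2 hγ).trans (hGF nw γ1 γ2 hγ)⟩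

theorem map (hG : EncodedBy C G) (f : T → T') (hf : ∀ F, C F → C' fun w => f (F w)) :
    EncodedBy C' fun nw γ1 γ2 => f (G nw γ1 γ2) := by
  obtain ⟨F, hF, hGF⟩ := hG
  exact ⟨_, hf F hF, fun nw γ1 γ2 hγ => congrArg f (hGF nw γ1 γ2 hγ)⟩

theorem map₂ (hG : EncodedBy C G) (hG' : EncodedBy C' G') (f : T → T' → T'')
    (hf : ∀ F F', C F → C' F' → C'' fun w => f (F w) (F' w)) :
    EncodedBy C'' fun nw γ1 γ2 => f (G nw γ1 γ2) (G' nw γ1 γ2) := by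
  obtain ⟨F, hF, hGF⟩ := hG
  obtain ⟨F', hF', hGF'⟩ := hG'
  exact ⟨_, hf F F' hF hF',
    fun nw γ1 γ2 hγ => congrArg₂ f (hGF nw γ1 γ2 hγ) (hGF' nw γ1 γ2 hγ)⟩

theorem quantifyPos (hG : EncodedBy C G) (q : Finset ℕ → (ℕ → T) → T') (x : ℕ)
    (hq : ∀ s f g, (∀ i ∈ s, f i = g i) → q s f = q s g)
    (hC : ∀ F, C F → C' fun w =>
      q (Icc 1 w.len) fun i => F ((w.annotate (· = i)).map (.setPos x))) :
    EncodedBy C' fun nw γ1 γ2 => q (Icc 1 nw.len) fun i => G nw (update γ1 x i) γ2 := by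
  obtain ⟨F, hF, hGF⟩ := hG
  refine ⟨_, hC F hF, fun nw γ1 γ2 hγ => ?_⟩
  rw [len_encode]
  refine hq _ _ _ fun i hi => ?_
  rw [hGF _ _ _ fun y => ?_, encode_update_pos]
  rw [update_apply]
  split_ifs
  exacts [hi, hγ y]

theorem quantifySet (hG : EncodedBy C G) (q : Finset (Finset ℕ) → (Finset ℕ → T) → T') (X : ℕ)
    (hC : ∀ F, C F → C' fun w =>
      q (Icc 1 w.len).powerset fun U => F ((w.annotate (· ∈ U)).map (.setSet X))) :
    EncodedBy C' fun nw γ1 γ2 => q (Icc 1 nw.len).powerset fun U => G nw γ1 (update γ2 X U) := by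
  obtain ⟨F, hF, hGF⟩ := hG
  refine ⟨_, hC F hF, fun nw γ1 γ2 hγ => ?_⟩
  rw [len_encode]
  exact congrArg (q _) (funext fun U => by rw [hGF _ _ _ hγ, encode_update_set])

theorem letter_pos (x : ℕ) (P : MarkedLetter Δ → Prop) : EncodedBy IsRecStep fun nw γ1 γ2 =>
    P ⟨nw.letter (γ1 x), fun y => γ1 x = γ1 y, fun X => γ1 x ∈ γ2 X⟩ := by
  refine ⟨_, .exists_letter fun a => a.pos x ∧ P a, fun nw γ1 γ2 hγ => propext ⟨fun h => ?_, ?_⟩⟩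
  · exact ⟨γ1 x, by simpa using hγ x, by rw [encode, letter_relabel _ (hγ x)]; exact ⟨rfl, h⟩⟩
  · rintro ⟨j, hj, hjx, hP⟩
    rw [len_encode] at hj
    rw [encode, letter_relabel _ hj] at hjx hP
    rwa [← show j = γ1 x from hjx]

theorem not {P : NestedWord Δ → (ℕ → ℕ) → (ℕ → Finset ℕ) → Prop} (hP : EncodedBy IsRecStep P) :
    EncodedBy IsRecStep fun nw γ1 γ2 => ¬ P nw γ1 γ2 :=
  hP.map Not fun _ hF => hF.map Not

theorem lt (x y : ℕ) : EncodedBy IsRecStep fun (_ : NestedWord Δ) γ1 _ => γ1 x < γ1 y := by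
  refine ⟨_, .exists_lt_letter (fun a => a.pos x) fun a => a.pos y,
    fun nw γ1 γ2 hγ => propext ⟨fun h => ?_, ?_⟩⟩
  · have hx := mem_Icc.1 (hγ x)
    refine ⟨γ1 y, by simpa using hγ y, ⟨γ1 x, by rw [mem_Icc]; omega, ?_⟩, ?_⟩
    · rw [encode, letter_relabel _ (hγ x)]
    · rw [encode, letter_relabel _ (hγ y)]
  · rintro ⟨j, hj, ⟨i, hi, hix⟩, hjy⟩
    rw [len_encode] at hj
    rw [mem_Icc] at hi hj
    rw [encode, letter_relabel _ (mem_Icc.2 (by omega))] at hix hjy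
    rw [← show i = γ1 x from hix, ← show j = γ1 y from hjy]
    omega

theorem rel (x y : ℕ) :
    EncodedBy IsRecStep fun (nw : NestedWord Δ) γ1 _ => nw.rel (γ1 x) (γ1 y) := by
  refine ⟨_, .exists_rel_letter (fun a => a.pos x) fun a => a.pos y,
    fun nw γ1 γ2 hγ => propext ⟨fun h => ⟨γ1 x, γ1 y, h, ?_, ?_⟩, ?_⟩⟩
  · rw [encode, letter_relabel _ (hγ x)]
  · rw [encode, letter_relabel _ (hγ y)]
  · rintro ⟨i, j, h, hix, hjy⟩
    have := nw.rel_bounds h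
    rw [encode, letter_relabel _ (mem_Icc.2 (by omega))] at hix hjy
    rwa [← show i = γ1 x from hix, ← show j = γ1 y from hjy]

theorem nwRegular {K : Type} [CommSemiring K] {S : NestedWord Δ → K}
    (hS : EncodedBy NWRegular fun nw _ _ => S nw) : NWRegular S := by
  obtain ⟨F, hF, hSF⟩ := hS
  convert (hF.comap fun a : Δ × Prop => ⟨a.1, fun _ => a.2, fun _ => False⟩).annotate_first
    using 2 with nw
  refine (hSF nw (fun _ => 1) (fun _ => ∅) fun _ => mem_Icc.2 ⟨le_rfl, nw.len_pos⟩).trans ?_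
  rw [annotate, map_relabel, encode]
  simp only [notMem_empty]

end EncodedBy

end Assignments

section ClassicalSemantics

open Finset Function

variable {Δ : Type}

namespace MSOF

/-- The classical semantics of MSO formulae. -/
def holds (nw : NestedWord Δ) : MSOF Δ → (ℕ → ℕ) → (ℕ → Finset ℕ) → Prop
  | .eqv x y, γ1, _ => γ1 x = γ1 y
  | .lab a x, γ1, _ => nw.letter (γ1 x) = a
  | .lev x y, γ1, _ => γ1 x ≤ γ1 y
  | .nuv x y, γ1, _ => nw.rel (γ1 x) (γ1 y)
  | .mem x X, γ1, γ2 => γ1 x ∈ γ2 X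
  | .not φ, γ1, γ2 => ¬ φ.holds nw γ1 γ2
  | .or φ ψ, γ1, γ2 => φ.holds nw γ1 γ2 ∨ ψ.holds nw γ1 γ2
  | .and φ ψ, γ1, γ2 => φ.holds nw γ1 γ2 ∧ ψ.holds nw γ1 γ2
  | .exF x φ, γ1, γ2 => ∃ i ∈ Icc 1 nw.len, φ.holds nw (update γ1 x i) γ2
  | .exS X φ, γ1, γ2 => ∃ U ∈ (Icc 1 nw.len).powerset, φ.holds nw γ1 (update γ2 X U)
  | .alF x φ, γ1, γ2 => ∀ i ∈ Icc 1 nw.len, φ.holds nw (update γ1 x i) γ2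
  | .alS X φ, γ1, γ2 => ∀ U ∈ (Icc 1 nw.len).powerset, φ.holds nw γ1 (update γ2 X U)

variable (nw : NestedWord Δ) {φ : MSOF Δ} (γ1 : ℕ → ℕ) (γ2 : ℕ → Finset ℕ)

theorem holds_update_pos_of_maxF_lt {y : ℕ} (hy : φ.maxF < y) (k : ℕ) :
    φ.holds nw (update γ1 y k) γ2 ↔ φ.holds nw γ1 γ2 := by
  induction φ generalizing γ1 γ2 with
  | exF z φ ih | alF z φ ih =>
    obtain ⟨hz, hφ⟩ := max_lt_iff.1 hy
    simp only [holds, update_comm hz.ne', ih _ _ hφ]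
  | exS _ _ ih | alS _ _ ih | not _ ih => simp only [holds, ih _ _ hy]
  | or _ _ ih ih' | and _ _ ih ih' =>
    obtain ⟨h, h'⟩ := max_lt_iff.1 hy
    simp only [holds, ih _ _ h, ih' _ _ h']
  | eqv | lev | nuv =>
    obtain ⟨h, h'⟩ := max_lt_iff.1 hy
    simp only [holds, update_of_ne h.ne, update_of_ne h'.ne]
  | lab _ u | mem u _ => simp only [holds, update_of_ne (show u < y from hy).ne]

theorem holds_update_set_of_maxS_lt {Y : ℕ} (hY : φ.maxS < Y) (U : Finset ℕ) :
    φ.holds nw γ1 (update γ2 Y U) ↔ φ.holds nw γ1 γ2 := by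
  induction φ generalizing γ1 γ2 with
  | exS z φ ih | alS z φ ih =>
    obtain ⟨hz, hφ⟩ := max_lt_iff.1 hY
    simp only [holds, update_comm hz.ne', ih _ _ hφ]
  | exF _ _ ih | alF _ _ ih | not _ ih => simp only [holds, ih _ _ hY]
  | or _ _ ih ih' | and _ _ ih ih' =>
    obtain ⟨h, h'⟩ := max_lt_iff.1 hY
    simp only [holds, ih _ _ h, ih' _ _ h']
  | mem _ Z => simp only [holds, update_of_ne (show Z < Y from hY).ne]
  | eqv | lab | lev | nuv => rfl

theorem apply_ite_eq_update {T : Type} (γ : ℕ → T) (x y u : ℕ) :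
    γ (if u = x then y else u) = update γ x (γ y) u := by
  rw [update_apply, apply_ite γ]

theorem holds_substF (x : ℕ) {y : ℕ} (hy : φ.maxF < y) :
    (φ.substF x y).holds nw γ1 γ2 ↔ φ.holds nw (update γ1 x (γ1 y)) γ2 := by
  induction φ generalizing γ1 γ2 with
  | exF z φ ih | alF z φ ih =>
    obtain ⟨hz, hφ⟩ := max_lt_iff.1 hy
    obtain rfl | hzx := eq_or_ne z x
    · simp only [substF, if_true, holds, update_idem]
    · simp only [substF, if_neg hzx, holds, ih _ _ hφ, update_of_ne hz.ne', update_comm hzx]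
  | exS _ _ ih | alS _ _ ih | not _ ih => simp only [substF, holds, ih _ _ hy]
  | or _ _ ih ih' | and _ _ ih ih' =>
    obtain ⟨h, h'⟩ := max_lt_iff.1 hy
    simp only [substF, holds, ih _ _ h, ih' _ _ h']
  | _ => simp only [substF, holds, apply_ite_eq_update γ1]

theorem holds_substS (X : ℕ) {Y : ℕ} (hY : φ.maxS < Y) :
    (φ.substS X Y).holds nw γ1 γ2 ↔ φ.holds nw γ1 (update γ2 X (γ2 Y)) := by
  induction φ generalizing γ1 γ2 with
  | exS Z φ ih | alS Z φ ih =>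
    obtain ⟨hZ, hφ⟩ := max_lt_iff.1 hY
    obtain rfl | hZX := eq_or_ne Z X
    · simp only [substS, if_true, holds, update_idem]
    · simp only [substS, if_neg hZX, holds, ih _ _ hφ, update_of_ne hZ.ne', update_comm hZX]
  | exF _ _ ih | alF _ _ ih | not _ ih => simp only [substS, holds, ih _ _ hY]
  | or _ _ ih ih' | and _ _ ih ih' =>
    obtain ⟨h, h'⟩ := max_lt_iff.1 hY
    simp only [substS, holds, ih _ _ h, ih' _ _ h']
  | mem => simp only [substS, holds, apply_ite_eq_update γ2]
  | eqv | lab | lev | nuv => rfl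

end MSOF

/-- The characteristic function of `U`, so that the strict order on keys is the lexicographic order
expressed by `lessSet`. -/
def lexKey (U : Finset ℕ) : Lex (ℕ → Prop) := toLex (· ∈ U)

theorem lexKey_injective : Injective lexKey := fun _ _ h =>
  Finset.ext fun j => iff_of_eq (congrFun (toLex.injective h) j)

theorem lexKey_lt_lexKey {U V : Finset ℕ} :
    lexKey U < lexKey V ↔ ∃ i, i ∈ V ∧ i ∉ U ∧ ∀ j < i, j ∈ U ↔ j ∈ V := by
  have lex_lt : lexKey U < lexKey V ↔ ∃ i, (∀ j < i, (j ∈ U) = (j ∈ V)) ∧ (i ∈ U) < (i ∈ V) :=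
    Iff.rfl
  simp only [lex_lt, lt_iff_le_not_ge, le_Prop_eq, eq_iff_iff]
  exact exists_congr fun i => by tauto

namespace MSOF

variable (nw : NestedWord Δ) (φ : MSOF Δ) (γ1 : ℕ → ℕ) (γ2 : ℕ → Finset ℕ)

theorem holds_lessSet {X Y : ℕ} (hX : γ2 X ⊆ Icc 1 nw.len) (hY : γ2 Y ⊆ Icc 1 nw.len) :
    (lessSet Y X).holds nw γ1 γ2 ↔ lexKey (γ2 Y) < lexKey (γ2 X) := by
  have agree_iff (i : ℕ) :
      (∀ j ∈ Icc 1 nw.len, i ≤ j ∨ (j ∉ γ2 Y ∨ j ∈ γ2 X) ∧ (j ∉ γ2 X ∨ j ∈ γ2 Y)) ↔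
        ∀ j < i, j ∈ γ2 Y ↔ j ∈ γ2 X := by
    refine forall_congr' fun j => ?_
    have := @hX j
    have := @hY j
    rw [← not_le]
    tauto
  rw [lexKey_lt_lexKey]
  simp only [lessSet, holds, update_self, update_of_ne zero_ne_one, agree_iff]
  exact exists_congr fun i => and_iff_right_of_imp fun h => hX h.1

theorem holds_lt_and_substF {x y : ℕ} (hy : y = (exF x φ).maxF + 1) (i k : ℕ) :
    (MSOF.and (.not (.lev x y)) (φ.substF x y)).holds nw (update (update γ1 x i) y k) γ2 ↔
      k < i ∧ φ.holds nw (update γ1 x k) γ2 := by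
  obtain ⟨hxy, hφ⟩ : x < y ∧ φ.maxF < y := max_lt_iff.1 (hy ▸ Nat.lt_succ_self _)
  simp only [holds, holds_substF nw _ _ x hφ, update_self, update_of_ne hxy.ne, not_le,
    update_comm hxy.ne', update_idem, holds_update_pos_of_maxF_lt nw _ _ hφ]

theorem holds_lessSet_and_substS {X Y : ℕ} (hY : Y = (exS X φ).maxS + 1) {U V : Finset ℕ}
    (hU : U ⊆ Icc 1 nw.len) (hV : V ⊆ Icc 1 nw.len) :
    (MSOF.and (lessSet Y X) (φ.substS X Y)).holds nw γ1 (update (update γ2 X U) Y V) ↔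
      lexKey V < lexKey U ∧ φ.holds nw γ1 (update γ2 X V) := by
  obtain ⟨hXY, hφ⟩ : X < Y ∧ φ.maxS < Y := max_lt_iff.1 (hY ▸ Nat.lt_succ_self _)
  have hX : update (update γ2 X U) Y V X = U := by rw [update_of_ne hXY.ne, update_self]
  have hless := holds_lessSet nw γ1 (update (update γ2 X U) Y V) (X := X) (Y := Y)
    (by rwa [hX]) (by rwa [update_self])
  rw [hX, update_self] at hless
  rw [holds, hless, holds_substS nw _ _ X hφ, update_self, update_comm hXY.ne', update_idem,
    holds_update_set_of_maxS_lt nw _ _ hφ]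

end MSOF

end ClassicalSemantics

section UnambiguousFormulae

open Finset Function

variable {K Δ : Type} [CommSemiring K]

open Classical in
/-- The value in `K` of the characteristic function of a set at a point satisfying `p` or not. -/
noncomputable def indicatorOf (K : Type) [CommSemiring K] (p : Prop) : K := if p then 1 else 0

section indicatorOf

variable {ι α : Type} (p q : Prop)

theorem ite_one_zero_eq_indicatorOf [Decidable p] :
    (if p then (1 : K) else 0) = indicatorOf K p := by
  rw [indicatorOf]
  congr

theorem ite_zero_one_eq_indicatorOf [Decidable p] :
    (if p then (0 : K) else 1) = indicatorOf K (¬ p) := by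
  rw [← ite_one_zero_eq_indicatorOf, ite_not]

theorem indicatorOf_mul : indicatorOf K p * indicatorOf K q = indicatorOf K (p ∧ q) := by
  by_cases hp : p <;> by_cases hq : q <;> simp [indicatorOf, hp, hq]

theorem indicatorOf_add_not_mul :
    indicatorOf K p + indicatorOf K (¬ p) * indicatorOf K q = indicatorOf K (p ∨ q) := by
  by_cases hp : p <;> by_cases hq : q <;> simp [indicatorOf, hp, hq]

theorem prod_indicatorOf (s : Finset ι) (p : ι → Prop) :
    ∏ i ∈ s, indicatorOf K (p i) = indicatorOf K (∀ i ∈ s, p i) := by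
  classical
  simp only [indicatorOf]
  convert prod_boole

theorem sum_indicatorOf_of_subsingleton {s : Finset ι} {p : ι → Prop}
    (hp : ∀ i ∈ s, ∀ j ∈ s, p i → p j → i = j) :
    ∑ i ∈ s, indicatorOf K (p i) = indicatorOf K (∃ i ∈ s, p i) := by
  classical
  by_cases h : ∃ i ∈ s, p i
  · obtain ⟨i, hi, hpi⟩ := h
    simp only [indicatorOf, if_pos (show ∃ i ∈ s, p i from ⟨i, hi, hpi⟩)]
    rw [sum_eq_single_of_mem i hi fun j hj hji => if_neg fun hpj => hji (hp j hj i hi hpj hpi),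
      if_pos hpi]
  · rw [indicatorOf, if_neg h]
    exact sum_eq_zero fun i hi => if_neg fun hpi => h ⟨i, hi, hpi⟩

theorem sum_indicatorOf_mul {s : Finset ι} {p : ι → Prop} {a : ι} (ha : a ∈ s)
    (hp : ∀ i ∈ s, p i ↔ i = a) (f : ι → K) : ∑ i ∈ s, indicatorOf K (p i) * f i = f a := by
  rw [sum_eq_single_of_mem a ha fun i hi hne => by
      rw [indicatorOf, if_neg (mt (hp i hi).1 hne), zero_mul],
    indicatorOf, if_pos ((hp a ha).2 rfl), one_mul]

/-- Only the witness of `p` that is least with respect to `f` contributes to the sum. -/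
theorem sum_indicatorOf_least [LinearOrder α] {f : ι → α} (hf : Injective f) (s : Finset ι)
    (p : ι → Prop) : ∑ i ∈ s, indicatorOf K (p i) * ∏ j ∈ s, indicatorOf K (¬ (f j < f i ∧ p j)) =
      indicatorOf K (∃ i ∈ s, p i) := by
  classical
  simp only [prod_indicatorOf, indicatorOf_mul]
  rw [sum_indicatorOf_of_subsingleton]
  · congr 1
    refine propext ⟨fun ⟨i, hi, hpi, _⟩ => ⟨i, hi, hpi⟩, fun ⟨i, hi, hpi⟩ => ?_⟩
    obtain ⟨m, hm, hmin⟩ := (s.filter p).exists_min_image f ⟨i, mem_filter.2 ⟨hi, hpi⟩⟩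
    rw [mem_filter] at hm
    exact ⟨m, hm.1, hm.2, fun j hj hjm => hjm.1.not_ge (hmin j (mem_filter.2 ⟨hj, hjm.2⟩))⟩
  · intro i hi j hj ⟨hpi, hi'⟩ ⟨hpj, hj'⟩
    exact hf (le_antisymm (not_lt.1 fun h => hi' j hj ⟨h, hpj⟩)
      (not_lt.1 fun h => hj' i hi ⟨h, hpi⟩))

end indicatorOf

mutual

theorem PlusOf.sem_eq (nw : NestedWord Δ) {ψ : MSOF Δ} {φ : WMSO K Δ} (h : PlusOf K ψ φ)
    (γ1 : ℕ → ℕ) (γ2 : ℕ → Finset ℕ) : φ.sem nw γ1 γ2 = indicatorOf K (ψ.holds nw γ1 γ2) :=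
  match h with
  | .eqv .. | .lab .. | .lev .. | .nuv .. | .mem .. => by
    simp only [WMSO.sem, MSOF.holds, ite_one_zero_eq_indicatorOf]
  | .not h => by rw [MSOF.holds, h.sem_eq]
  | .or h h' h'' => by
    rw [WMSO.sem, WMSO.sem, MSOF.holds, h.sem_eq, h'.sem_eq, h''.sem_eq, indicatorOf_add_not_mul]
  | .and h h' => by rw [WMSO.sem, MSOF.holds, h.sem_eq, h'.sem_eq, indicatorOf_mul]
  | .alF h | .alS h => by simp only [WMSO.sem, MSOF.holds, h.sem_eq, prod_indicatorOf]
  | .exF y hy h h' => by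
    simp only [WMSO.sem, h.sem_eq, h'.sem_eq, MSOF.holds_lt_and_substF nw _ _ _ hy]
    exact sum_indicatorOf_least injective_id _ _
  | .exS Y hY h h' => by
    rw [MSOF.holds, ← sum_indicatorOf_least lexKey_injective]
    simp only [WMSO.sem, h.sem_eq, h'.sem_eq]
    refine sum_congr rfl fun U hU => congrArg _ (prod_congr rfl fun V hV => ?_)
    rw [MSOF.holds_lessSet_and_substS nw _ _ _ hY (mem_powerset.1 hU) (mem_powerset.1 hV)]
    rfl

theorem MinusOf.sem_eq (nw : NestedWord Δ) {ψ : MSOF Δ} {φ : WMSO K Δ} (h : MinusOf K ψ φ)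
    (γ1 : ℕ → ℕ) (γ2 : ℕ → Finset ℕ) : φ.sem nw γ1 γ2 = indicatorOf K (¬ ψ.holds nw γ1 γ2) :=
  match h with
  | .eqv .. | .lab .. | .lev .. | .nuv .. | .mem .. => by
    simp only [WMSO.sem, MSOF.holds, ite_zero_one_eq_indicatorOf]
  | .not h => by rw [MSOF.holds, h.sem_eq, not_not]
  | .or h h' => by rw [WMSO.sem, MSOF.holds, h.sem_eq, h'.sem_eq, indicatorOf_mul, not_or]
  | .and h h' h'' => by
    rw [WMSO.sem, WMSO.sem, MSOF.holds, h.sem_eq, h'.sem_eq, h''.sem_eq, not_and_or,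
      ← indicatorOf_add_not_mul, not_not]
  | .exF h | .exS h => by
    simp only [WMSO.sem, MSOF.holds, h.sem_eq, prod_indicatorOf, not_exists, not_and]
  | .alF (ψ := ψ) y hy h h' => by
    have least := MSOF.holds_lt_and_substF nw ψ.not γ1 γ2 hy
    rw [MSOF.substF] at least
    rw [MSOF.holds]
    simp only [WMSO.sem, h.sem_eq, h'.sem_eq, least, not_forall, exists_prop]
    exact sum_indicatorOf_least injective_id _ _
  | .alS (ψ := ψ) Y hY h h' => by
    rw [MSOF.holds]
    simp only [not_forall, exists_prop]
    rw [← sum_indicatorOf_least lexKey_injective]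
    simp only [WMSO.sem, h.sem_eq, h'.sem_eq]
    refine sum_congr rfl fun U hU => congrArg _ (prod_congr rfl fun V hV => ?_)
    rw [← MSOF.substS, MSOF.holds_lessSet_and_substS nw ψ.not _ _ hY (mem_powerset.1 hU)
      (mem_powerset.1 hV)]
    rfl

end

end UnambiguousFormulae

section Definability

open Finset Function

theorem SyntUnamb.alF {x : ℕ} {K Δ : Type} {φ : WMSO K Δ} (hφ : SyntUnamb φ) :
    SyntUnamb (.alF x φ) :=
  let ⟨_, h⟩ := hφ
  h.elim (fun h => ⟨_, .inl (.alF h)⟩) fun h => ⟨_, .inr (.exF h)⟩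

theorem SyntUnamb.alS {X : ℕ} {K Δ : Type} {φ : WMSO K Δ} (hφ : SyntUnamb φ) :
    SyntUnamb (.alS X φ) :=
  let ⟨_, h⟩ := hφ
  h.elim (fun h => ⟨_, .inl (.alS h)⟩) fun h => ⟨_, .inr (.exS h)⟩

variable {K Δ : Type} [CommSemiring K]

namespace EncodedBy

theorem exists_pos {P : NestedWord Δ → (ℕ → ℕ) → (ℕ → Finset ℕ) → Prop}
    (hP : EncodedBy IsRecStep P) (x : ℕ) :
    EncodedBy IsRecStep fun nw γ1 γ2 => ∃ i ∈ Icc 1 nw.len, P nw (update γ1 x i) γ2 :=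
  hP.quantifyPos (fun s f => ∃ i ∈ s, f i) x
    (fun _ _ _ h => propext <| exists_congr fun i => and_congr_right fun hi => by rw [h i hi])
    fun _ hF => (hF.comap (.setPos x)).exists_pos

theorem exists_set {P : NestedWord Δ → (ℕ → ℕ) → (ℕ → Finset ℕ) → Prop}
    (hP : EncodedBy IsRecStep P) (X : ℕ) : EncodedBy IsRecStep fun nw γ1 γ2 =>
      ∃ U ∈ (Icc 1 nw.len).powerset, P nw γ1 (update γ2 X U) :=
  hP.quantifySet (fun s f => ∃ U ∈ s, f U) X fun _ hF => (hF.comap (.setSet X)).exists_powerset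

end EncodedBy

theorem MSOF.encodedBy_holds (ψ : MSOF Δ) :
    EncodedBy IsRecStep fun nw γ1 γ2 => ψ.holds nw γ1 γ2 := by
  induction ψ with
  | eqv x y => exact .letter_pos x fun a => a.pos y
  | lab a x => exact .letter_pos x fun b => b.letter = a
  | mem x X => exact .letter_pos x fun a => a.sets X
  | lev x y => exact (EncodedBy.lt y x).not.congr fun _ _ _ _ => propext not_lt.symm
  | nuv x y => exact .rel x y
  | not _ ih => exact ih.not
  | or _ _ ih ih' => exact ih.map₂ ih' Or fun _ _ hF hF' => hF.map₂ hF' Or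
  | and _ _ ih ih' => exact ih.map₂ ih' And fun _ _ hF hF' => hF.map₂ hF' And
  | exF x _ ih => exact ih.exists_pos x
  | exS X _ ih => exact ih.exists_set X
  | alF x _ ih =>
    refine (ih.not.exists_pos x).not.congr fun _ _ _ _ => ?_
    simp only [holds, not_exists, not_and, not_not]
  | alS X _ ih =>
    refine (ih.not.exists_set X).not.congr fun _ _ _ _ => ?_
    simp only [holds, not_exists, not_and, not_not]

theorem SyntUnamb.encodedBy_sem {φ : WMSO K Δ} (hφ : SyntUnamb φ) :
    EncodedBy IsRecStep fun nw γ1 γ2 => φ.sem nw γ1 γ2 := by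
  obtain ⟨ψ, h | h⟩ := hφ
  · exact (ψ.encodedBy_holds.map (indicatorOf K) fun _ hF => hF.map _).congr
      fun nw γ1 γ2 _ => h.sem_eq nw γ1 γ2
  · exact (ψ.encodedBy_holds.not.map (indicatorOf K) fun _ hF => hF.map _).congr
      fun nw γ1 γ2 _ => h.sem_eq nw γ1 γ2

theorem WUMSO.encodedBy_sem (hK : AddLocallyFinite K) {φ : WMSO K Δ} (hφ : WUMSO φ) :
    EncodedBy IsRecStep fun nw γ1 γ2 => φ.sem nw γ1 γ2 := by
  induction hφ with
  | const k => exact ⟨_, .const k, fun _ _ _ _ => rfl⟩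
  | unamb h => exact h.encodedBy_sem
  | and _ _ ih ih' => exact ih.map₂ ih' (· * ·) fun _ _ hF hF' => hF.map₂ hF' _
  | or _ _ ih ih' => exact ih.map₂ ih' (· + ·) fun _ _ hF hF' => hF.map₂ hF' _
  | @exF x _ _ ih =>
    exact ih.quantifyPos (fun s f => ∑ i ∈ s, f i) x (fun _ _ _ => sum_congr rfl)
      fun _ hF => (hF.comap (.setPos x)).sum_pos hK
  | @exS X _ _ ih =>
    exact ih.quantifySet (fun s f => ∑ U ∈ s, f U) X
      fun _ hF => (hF.comap (.setSet X)).sum_powerset hK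

theorem SWRMSO.encodedBy_sem (hK : AddLocallyFinite K) {φ : WMSO K Δ} (hφ : SWRMSO φ) :
    EncodedBy NWRegular fun nw γ1 γ2 => φ.sem nw γ1 γ2 := by
  have nwRegular {G : NestedWord Δ → (ℕ → ℕ) → (ℕ → Finset ℕ) → K} (hG : EncodedBy IsRecStep G) :
      EncodedBy NWRegular G := hG.map id fun _ hF => hF.nwRegular
  induction φ with
  | const k => exact nwRegular (WUMSO.const k |>.encodedBy_sem hK)
  | eqv x y => exact nwRegular (SyntUnamb.encodedBy_sem ⟨_, .inl (.eqv x y)⟩)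
  | lab a x => exact nwRegular (SyntUnamb.encodedBy_sem ⟨_, .inl (.lab a x)⟩)
  | lev x y => exact nwRegular (SyntUnamb.encodedBy_sem ⟨_, .inl (.lev x y)⟩)
  | nuv x y => exact nwRegular (SyntUnamb.encodedBy_sem ⟨_, .inl (.nuv x y)⟩)
  | mem x X => exact nwRegular (SyntUnamb.encodedBy_sem ⟨_, .inl (.mem x X)⟩)
  | neq x y => exact nwRegular (SyntUnamb.encodedBy_sem ⟨_, .inr (.eqv x y)⟩)
  | nlab a x => exact nwRegular (SyntUnamb.encodedBy_sem ⟨_, .inr (.lab a x)⟩)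
  | nle x y => exact nwRegular (SyntUnamb.encodedBy_sem ⟨_, .inr (.lev x y)⟩)
  | nnu x y => exact nwRegular (SyntUnamb.encodedBy_sem ⟨_, .inr (.nuv x y)⟩)
  | nmem x X => exact nwRegular (SyntUnamb.encodedBy_sem ⟨_, .inr (.mem x X)⟩)
  | and _ _ ih ih' => exact (ih hφ.1).map₂ (ih' hφ.2) (· * ·) fun _ _ hF hF' => hF.mul hF'
  | or _ _ ih ih' => exact (ih hφ.1).map₂ (ih' hφ.2) (· + ·) fun _ _ hF hF' => hF.add hF'
  | exF x _ ih =>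
    exact (ih hφ).quantifyPos (fun s f => ∑ i ∈ s, f i) x (fun _ _ _ => sum_congr rfl)
      fun _ hF => (hF.comap (.setPos x)).sum_pos
  | exS X _ ih =>
    exact (ih hφ).quantifySet (fun s f => ∑ U ∈ s, f U) X
      fun _ hF => (hF.comap (.setSet X)).sum_powerset
  | alF x _ _ =>
    exact (hφ.1.encodedBy_sem hK).quantifyPos (fun s f => ∏ i ∈ s, f i) x
      (fun _ _ _ => prod_congr rfl) fun _ hF => (hF.comap (.setPos x)).prod_pos
  | alS X _ _ => exact nwRegular hφ.1.alS.encodedBy_sem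

theorem NWDefinable.nwRegular (hK : AddLocallyFinite K) {S : NestedWord Δ → K}
    (hS : NWDefinable SWRMSO S) : NWRegular S := by
  obtain ⟨φ, hφ, -, hφS⟩ := hS
  exact ((hφ.encodedBy_sem hK).congr fun nw γ1 γ2 _ => (hφS nw γ1 γ2).symm).nwRegular

end Definability

section SourceStates

open Finset Function NestedWord

variable {K Δ Q P : Type}

theorem clampFun_snoc {n : ℕ} {u : Fin n → Q} {σ : ℕ → Q} (hσ : ∀ i : Fin n, σ (i + 1) = u i)
    (q : Q) (j : ℕ) :
    clampFun (Fin.snoc (α := fun _ => Q) u q) j = if j < n then σ (j + 1) else q := by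
  simp only [clampFun, Fin.snoc, cast_eq]
  split_ifs with h h' h'
  · exact (congrArg u (Fin.ext (min_eq_left h'.le))).trans (hσ ⟨j, h'⟩).symm
  all_goals first | omega | rfl

theorem stepWeight_snoc (t : PosKind → Q → Q → Δ → Q → K) (nw : NestedWord Δ)
    {u : Fin nw.len → Q} {σ : ℕ → Q} (hσ : ∀ i : Fin nw.len, σ (i + 1) = u i) (q : Q) {j : ℕ}
    (hj : j ∈ Icc 1 nw.len) : stepWeight t nw (clampFun (Fin.snoc (α := fun _ => Q) u q)) j =
      t (nw.kind j) (σ j) (σ (nw.back j + 1)) (nw.letter j)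
        (if j < nw.len then σ (j + 1) else q) := by
  rw [mem_Icc] at hj
  have := nw.back_le j
  rw [stepWeight, clampFun_snoc hσ, clampFun_snoc hσ, clampFun_snoc hσ, if_pos (by omega),
    if_pos (by omega), Nat.sub_add_cancel hj.1]

variable [CommSemiring K]

theorem runSum_extend [Fintype Q] [Fintype P] {e : Q → P} (he : Injective e) (ι : Q → K)
    (t : PosKind → Q → Q → Δ → Q → K) (κ : Q → K) :
    runSum (extend e ι 0)
      (fun k p c a => extend e (fun q => extend e (fun p => extend e (t k p · a q) 0 c) 0 p) 0)
      (extend e κ 0) = runSum ι t κ := by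
  funext nw
  refine (Fintype.sum_of_injective (e ∘ ·) he.comp_left _ _ (fun r hr => ?_) fun r => ?_).symm
  · obtain ⟨i, hi⟩ : ∃ i, r i ∉ Set.range e := by
      by_contra! h
      choose s hs using h
      exact hr ⟨s, funext hs⟩
    cases i using Fin.cases with
    | zero => rw [extend_apply' _ _ _ hi, Pi.zero_apply, zero_mul, zero_mul]
    | succ j =>
      have hj : (j : ℕ) + 1 ∈ Icc 1 nw.len := mem_Icc.2 ⟨Nat.le_add_left _ _, j.isLt⟩
      rw [prod_eq_zero hj, mul_zero, zero_mul]
      rw [stepWeight, clampFun_of_le r j.isLt]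
      exact extend_apply' _ _ _ hi
  · simp only [stepWeight, clampFun, comp_apply, he.extend_apply]

theorem NWRegular.exists_runSum_bits {S : NestedWord Δ → K} (hS : NWRegular S) :
    ∃ (m : ℕ) (ι : (Fin m → Prop) → K)
      (t : PosKind → (Fin m → Prop) → (Fin m → Prop) → Δ → (Fin m → Prop) → K)
      (κ : (Fin m → Prop) → K), S = runSum ι t κ := by
  obtain ⟨Q, _, ι, t, κ, rfl⟩ := nwRegular_iff.1 hS
  have he : Injective fun q i => Fintype.equivFin Q q = i := fun p q h =>
    (Fintype.equivFin Q).injective <| ((congrFun h (Fintype.equivFin Q q)).mpr rfl)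
  exact ⟨_, _, _, _, (runSum_extend he ι t κ).symm⟩

/-- The weight of position `j` if `σ` gives the states in front of the positions. No position has
the final state in front of it, so the last position sums over the final states. -/
noncomputable def sourceWeight [Fintype Q] (t : PosKind → Q → Q → Δ → Q → K) (κ : Q → K)
    (nw : NestedWord Δ) (σ : ℕ → Q) (j : ℕ) : K :=
  if j < nw.len then t (nw.kind j) (σ j) (σ (nw.back j + 1)) (nw.letter j) (σ (j + 1))
  else ∑ q, t (nw.kind j) (σ j) (σ (nw.back j + 1)) (nw.letter j) q * κ q

theorem runSum_eq_sum_sourceWeight [Fintype Q] (ι : Q → K) (t : PosKind → Q → Q → Δ → Q → K)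
    (κ : Q → K) (nw : NestedWord Δ) {σ : (Fin nw.len → Q) → ℕ → Q}
    (hσ : ∀ u (i : Fin nw.len), σ u (i + 1) = u i) :
    runSum ι t κ nw = ∑ u : Fin nw.len → Q,
      ι (σ u 1) * ∏ j ∈ Icc 1 nw.len, sourceWeight t κ nw (σ u) j := by
  have hlen : nw.len ∈ Icc 1 nw.len := mem_Icc.2 ⟨nw.len_pos, le_rfl⟩
  rw [runSum, ← (Fin.snocEquiv fun _ => Q).sum_comp, Fintype.sum_prod_type_right]
  refine sum_congr rfl fun u _ => ?_
  rw [← mul_prod_erase _ _ hlen, sourceWeight, if_neg (lt_irrefl _), sum_mul, mul_sum]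
  refine sum_congr rfl fun q _ => ?_
  have hsnoc : Fin.snocEquiv (fun _ => Q) (q, u) = Fin.snoc (α := fun _ => Q) u q := rfl
  have hzero : Fin.snoc (α := fun _ => Q) u q 0 = σ u 1 := by
    simpa [clampFun, nw.len_pos] using clampFun_snoc (hσ u) q 0
  have hprod : ∏ j ∈ Icc 1 nw.len, stepWeight t nw (clampFun (Fin.snoc (α := fun _ => Q) u q)) j =
      t (nw.kind nw.len) (σ u nw.len) (σ u (nw.back nw.len + 1)) (nw.letter nw.len) q *
        ∏ j ∈ (Icc 1 nw.len).erase nw.len, sourceWeight t κ nw (σ u) j := by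
    rw [← mul_prod_erase _ _ hlen, stepWeight_snoc t nw (hσ u) q hlen, if_neg (lt_irrefl _)]
    refine congrArg _ (prod_congr rfl fun j hj => ?_)
    obtain ⟨hne, hj⟩ := mem_erase.1 hj
    have hlt : j < nw.len := lt_of_le_of_ne (mem_Icc.1 hj).2 hne
    rw [stepWeight_snoc t nw (hσ u) q hj, if_pos hlt, sourceWeight, if_pos hlt]
  rw [hsnoc, hzero, hprod, Fin.snoc_last]
  ring

end SourceStates

section WeaklyUnambiguousSeries

open Finset Function NestedWord

variable {K Δ : Type} [CommSemiring K]

/-- The series with assignments `G` is the semantics of a weakly unambiguous formula with free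
variables among `V` and `W`. Only assignments that map `V` to positions matter. -/
def WUMSODefinable (V W : Finset ℕ) (G : NestedWord Δ → (ℕ → ℕ) → (ℕ → Finset ℕ) → K) : Prop :=
  ∃ φ : WMSO K Δ, WUMSO φ ∧ φ.freeF ⊆ V ∧ φ.freeS ⊆ W ∧
    ∀ nw γ1 γ2, (∀ x ∈ V, γ1 x ∈ Icc 1 nw.len) → φ.sem nw γ1 γ2 = G nw γ1 γ2

namespace WUMSODefinable

variable {V W : Finset ℕ} {G G' : NestedWord Δ → (ℕ → ℕ) → (ℕ → Finset ℕ) → K}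

theorem congr (hG : WUMSODefinable V W G)
    (h : ∀ nw γ1 γ2, (∀ x ∈ V, γ1 x ∈ Icc 1 nw.len) → G nw γ1 γ2 = G' nw γ1 γ2) :
    WUMSODefinable V W G' := by
  obtain ⟨φ, hφ, hF, hS, hsem⟩ := hG
  exact ⟨φ, hφ, hF, hS, fun nw γ1 γ2 hγ => (hsem nw γ1 γ2 hγ).trans (h nw γ1 γ2 hγ)⟩

theorem of_syntUnamb {φ : WMSO K Δ} (hφ : SyntUnamb φ) (hF : φ.freeF ⊆ V) (hS : φ.freeS ⊆ W) :
    WUMSODefinable V W fun nw => φ.sem nw :=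
  ⟨φ, .unamb hφ, hF, hS, fun _ _ _ _ => rfl⟩

theorem const (k : K) : WUMSODefinable V W fun (_ : NestedWord Δ) _ _ => k :=
  ⟨.const k, .const k, empty_subset _, empty_subset _, fun _ _ _ _ => rfl⟩

theorem add (hG : WUMSODefinable V W G) (hG' : WUMSODefinable V W G') :
    WUMSODefinable V W fun nw γ1 γ2 => G nw γ1 γ2 + G' nw γ1 γ2 := by
  obtain ⟨φ, hφ, hF, hS, hsem⟩ := hG
  obtain ⟨φ', hφ', hF', hS', hsem'⟩ := hG'
  exact ⟨.or φ φ', hφ.or hφ', union_subset hF hF', union_subset hS hS', fun nw γ1 γ2 hγ => by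
    rw [WMSO.sem, hsem nw γ1 γ2 hγ, hsem' nw γ1 γ2 hγ]⟩

theorem mul (hG : WUMSODefinable V W G) (hG' : WUMSODefinable V W G') :
    WUMSODefinable V W fun nw γ1 γ2 => G nw γ1 γ2 * G' nw γ1 γ2 := by
  obtain ⟨φ, hφ, hF, hS, hsem⟩ := hG
  obtain ⟨φ', hφ', hF', hS', hsem'⟩ := hG'
  exact ⟨.and φ φ', hφ.and hφ', union_subset hF hF', union_subset hS hS', fun nw γ1 γ2 hγ => by
    rw [WMSO.sem, hsem nw γ1 γ2 hγ, hsem' nw γ1 γ2 hγ]⟩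

theorem sum {α : Type} (s : Finset α)
    {G : α → NestedWord Δ → (ℕ → ℕ) → (ℕ → Finset ℕ) → K} (hG : ∀ i, WUMSODefinable V W (G i)) :
    WUMSODefinable V W fun nw γ1 γ2 => ∑ i ∈ s, G i nw γ1 γ2 := by
  induction s using Finset.cons_induction with
  | empty => exact const 0
  | cons i s hi ih => simpa only [sum_cons] using (hG i).add ih

theorem prod {α : Type} (s : Finset α)
    {G : α → NestedWord Δ → (ℕ → ℕ) → (ℕ → Finset ℕ) → K} (hG : ∀ i, WUMSODefinable V W (G i)) :
    WUMSODefinable V W fun nw γ1 γ2 => ∏ i ∈ s, G i nw γ1 γ2 := by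
  induction s using Finset.cons_induction with
  | empty => exact const 1
  | cons i s hi ih => simpa only [prod_cons] using (hG i).mul ih

theorem sum_pos {y : ℕ} (hG : WUMSODefinable (insert y V) W G) :
    WUMSODefinable V W fun nw γ1 γ2 => ∑ i ∈ Icc 1 nw.len, G nw (update γ1 y i) γ2 := by
  obtain ⟨φ, hφ, hF, hS, hsem⟩ := hG
  refine ⟨.exF y φ, hφ.exF, ?_, hS, fun nw γ1 γ2 hγ => sum_congr rfl fun i hi => ?_⟩
  · exact (erase_subset_erase _ hF).trans (erase_insert_subset _ _)
  · refine hsem nw _ γ2 fun x hx => ?_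
    obtain rfl | hxy := eq_or_ne x y
    · rwa [update_self]
    · rw [update_of_ne hxy]
      exact hγ x (mem_of_mem_insert_of_ne hx hxy)

theorem comp {α : Type} [Finite α] {f : NestedWord Δ → (ℕ → ℕ) → (ℕ → Finset ℕ) → α}
    (hf : ∀ a, WUMSODefinable V W fun nw γ1 γ2 => indicatorOf K (f nw γ1 γ2 = a))
    {G : α → NestedWord Δ → (ℕ → ℕ) → (ℕ → Finset ℕ) → K} (hG : ∀ a, WUMSODefinable V W (G a)) :
    WUMSODefinable V W fun nw γ1 γ2 => G (f nw γ1 γ2) nw γ1 γ2 := by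
  have := Fintype.ofFinite α
  refine (sum univ fun a => (hf a).mul (hG a)).congr fun nw γ1 γ2 _ => ?_
  exact sum_indicatorOf_mul (mem_univ _) (fun _ _ => eq_comm) fun a => G a nw γ1 γ2

variable {x y : ℕ}

theorem letter_eq (hx : x ∈ V) (a : Δ) :
    WUMSODefinable V W fun nw γ1 _ => indicatorOf K (nw.letter (γ1 x) = a) :=
  of_syntUnamb ⟨_, .inl (.lab a x)⟩ (singleton_subset_iff.2 hx) (empty_subset _)

theorem rel (hx : x ∈ V) (hy : y ∈ V) :
    WUMSODefinable V W fun (nw : NestedWord Δ) γ1 _ => indicatorOf K (nw.rel (γ1 x) (γ1 y)) :=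
  of_syntUnamb ⟨_, .inl (.nuv x y)⟩ (insert_subset hx (singleton_subset_iff.2 hy))
    (empty_subset _)

theorem lt (hx : x ∈ V) (hy : y ∈ V) :
    WUMSODefinable V W fun (_ : NestedWord Δ) γ1 _ => indicatorOf K (γ1 x < γ1 y) := by
  refine (of_syntUnamb ⟨_, .inr (.lev y x)⟩ (insert_subset hy (singleton_subset_iff.2 hx))
    (empty_subset _)).congr fun nw γ1 γ2 _ => ?_
  rw [WMSO.sem, ite_zero_one_eq_indicatorOf, not_le]

theorem mem_iff (hx : x ∈ V) {X : ℕ} (hX : X ∈ W) (p : Prop) :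
    WUMSODefinable V W fun (_ : NestedWord Δ) γ1 γ2 => indicatorOf K (γ1 x ∈ γ2 X ↔ p) := by
  by_cases hp : p
  · refine (of_syntUnamb ⟨_, .inl (.mem x X)⟩ (singleton_subset_iff.2 hx)
      (singleton_subset_iff.2 hX)).congr fun nw γ1 γ2 _ => ?_
    rw [WMSO.sem, ite_one_zero_eq_indicatorOf, iff_true_right hp]
  · refine (of_syntUnamb ⟨_, .inr (.mem x X)⟩ (singleton_subset_iff.2 hx)
      (singleton_subset_iff.2 hX)).congr fun nw γ1 γ2 _ => ?_
    rw [WMSO.sem, ite_zero_one_eq_indicatorOf, iff_false_right hp]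

theorem forall_pos {φ : WMSO K Δ} (hφ : SyntUnamb φ) (hF : φ.freeF ⊆ insert y V)
    (hS : φ.freeS ⊆ W) {P : NestedWord Δ → (ℕ → ℕ) → (ℕ → Finset ℕ) → Prop}
    (hP : ∀ nw γ1 γ2, φ.sem nw γ1 γ2 = indicatorOf K (P nw γ1 γ2)) :
    WUMSODefinable V W fun nw γ1 γ2 =>
      indicatorOf K (∀ i ∈ Icc 1 nw.len, P nw (update γ1 y i) γ2) := by
  refine (of_syntUnamb (hφ.alF (x := y))
    ((erase_subset_erase _ hF).trans (erase_insert_subset _ _)) hS).congr fun nw γ1 γ2 _ => ?_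
  simp only [WMSO.sem, hP, prod_indicatorOf]

theorem eq_one (hx : x ∈ V) :
    WUMSODefinable V W fun (_ : NestedWord Δ) γ1 _ => indicatorOf K (γ1 x = 1) := by
  obtain ⟨z, hz⟩ := Infinite.exists_notMem_finset V
  refine (forall_pos (φ := .lev x z) (y := z) ⟨_, .inl (.lev x z)⟩
    (insert_subset (mem_insert_of_mem hx) (singleton_subset_iff.2 (mem_insert_self _ _)))
    (empty_subset _) fun _ _ _ => ite_one_zero_eq_indicatorOf _).congr fun nw γ1 γ2 hγ => ?_
  simp only [update_self, update_of_ne (ne_of_mem_of_not_mem hx hz)]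
  have hpos := mem_Icc.1 (hγ x hx)
  exact congrArg _ <| propext ⟨fun h => (h 1 (mem_Icc.2 ⟨le_rfl, nw.len_pos⟩)).antisymm hpos.1,
    fun h i hi => h ▸ (mem_Icc.1 hi).1⟩

theorem eq_len (hx : x ∈ V) :
    WUMSODefinable V W fun (nw : NestedWord Δ) γ1 _ => indicatorOf K (γ1 x = nw.len) := by
  obtain ⟨z, hz⟩ := Infinite.exists_notMem_finset V
  refine (forall_pos (φ := .lev z x) (y := z) ⟨_, .inl (.lev z x)⟩
    (insert_subset (mem_insert_self _ _) (singleton_subset_iff.2 (mem_insert_of_mem hx)))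
    (empty_subset _) fun _ _ _ => ite_one_zero_eq_indicatorOf _).congr fun nw γ1 γ2 hγ => ?_
  simp only [update_self, update_of_ne (ne_of_mem_of_not_mem hx hz)]
  have hpos := mem_Icc.1 (hγ x hx)
  exact congrArg _ <| propext ⟨fun h => hpos.2.antisymm (h _ (mem_Icc.2 ⟨nw.len_pos, le_rfl⟩)),
    fun h i hi => h ▸ (mem_Icc.1 hi).2⟩

theorem eq_succ (hx : x ∈ V) (hy : y ∈ V) :
    WUMSODefinable V W fun (_ : NestedWord Δ) γ1 _ => indicatorOf K (γ1 y = γ1 x + 1) := by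
  obtain ⟨z, hz⟩ := Infinite.exists_notMem_finset V
  refine ((lt hx hy).mul (forall_pos (φ := .or (.lev z x) (.and (.nle z x) (.lev y z)))
    (P := fun _ γ1 _ => γ1 z ≤ γ1 x ∨ γ1 y ≤ γ1 z) (y := z)
    ⟨_, .inl (.or (.lev z x) (.lev z x) (.lev y z))⟩ ?_ ?_ fun _ _ _ => ?_)).congr
    fun nw γ1 γ2 hγ => ?_
  · simp [WMSO.freeF, insert_subset_iff, hx, hy]
  · simp [WMSO.freeS]
  · simp only [WMSO.sem, ite_one_zero_eq_indicatorOf, ite_zero_one_eq_indicatorOf,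
      indicatorOf_add_not_mul]
  simp only [indicatorOf_mul, update_self, update_of_ne (ne_of_mem_of_not_mem hx hz),
    update_of_ne (ne_of_mem_of_not_mem hy hz)]
  have hxpos := mem_Icc.1 (hγ x hx)
  have hypos := mem_Icc.1 (hγ y hy)
  refine congrArg _ <| propext ⟨fun ⟨_, h⟩ => ?_, fun h => ⟨by omega, fun i _ => by omega⟩⟩
  have := h (γ1 x + 1) (mem_Icc.2 (by omega))
  omega

theorem isCall (hx : x ∈ V) :
    WUMSODefinable V W fun (nw : NestedWord Δ) γ1 _ => indicatorOf K (nw.IsCall (γ1 x)) := by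
  obtain ⟨y, hy⟩ := Infinite.exists_notMem_finset V
  refine (rel (mem_insert_of_mem hx) (mem_insert_self y V)).sum_pos.congr fun nw γ1 γ2 _ => ?_
  simp only [update_self, update_of_ne (ne_of_mem_of_not_mem hx hy)]
  rw [sum_indicatorOf_of_subsingleton fun i _ j _ => nw.isNest.2.1 _ i j, isCall_iff]

theorem isReturn (hx : x ∈ V) :
    WUMSODefinable V W fun (nw : NestedWord Δ) γ1 _ => indicatorOf K (nw.IsReturn (γ1 x)) := by
  obtain ⟨y, hy⟩ := Infinite.exists_notMem_finset V
  refine (rel (mem_insert_self y V) (mem_insert_of_mem hx)).sum_pos.congr fun nw γ1 γ2 _ => ?_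
  simp only [update_self, update_of_ne (ne_of_mem_of_not_mem hx hy)]
  rw [sum_indicatorOf_of_subsingleton fun i _ j _ => nw.isNest.2.2.1 i j _, isReturn_iff]

theorem kind_eq (hx : x ∈ V) (k : PosKind) : WUMSODefinable V W
    fun (nw : NestedWord Δ) γ1 _ => indicatorOf K (nw.kind (γ1 x) = k) := by
  cases k with
  | call => simpa only [kind_eq_call_iff] using isCall hx
  | ret => simpa only [kind_eq_ret_iff] using isReturn hx
  | int =>
    obtain ⟨z, hz⟩ := Infinite.exists_notMem_finset V
    refine (forall_pos (φ := .and (.nnu x z) (.nnu z x)) (y := z)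
      (P := fun nw γ1 _ => ¬ nw.rel (γ1 x) (γ1 z) ∧ ¬ nw.rel (γ1 z) (γ1 x))
      ⟨_, .inl (.and (.not (.nuv x z)) (.not (.nuv z x)))⟩ ?_ (empty_subset _) fun _ _ _ => ?_
      ).congr fun nw γ1 _ _ => ?_
    · simp [WMSO.freeF, insert_subset_iff, hx]
    · simp only [WMSO.sem, ite_zero_one_eq_indicatorOf, indicatorOf_mul]
    · simp only [update_self, update_of_ne (ne_of_mem_of_not_mem hx hz), kind_eq_int_iff,
        isCall_iff, isReturn_iff, not_exists, not_and, forall_and]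

end WUMSODefinable

/-- The state in front of position `j`, if `γ2 X` is the set of the positions that have bit `X` in
their source state. -/
def sourceState (m : ℕ) (γ2 : ℕ → Finset ℕ) (j : ℕ) (X : Fin m) : Prop := j ∈ γ2 X

namespace WUMSODefinable

variable {m : ℕ}

theorem sourceState_eq (hx : x ∈ V) (p : Fin m → Prop) : WUMSODefinable V (range m)
    fun (_ : NestedWord Δ) γ1 γ2 => indicatorOf K (sourceState m γ2 (γ1 x) = p) :=
  (prod univ fun X : Fin m => mem_iff hx (mem_range.2 X.isLt) (p X)).congr fun _ γ1 γ2 _ => by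
    rw [prod_indicatorOf]
    exact congrArg _ <| propext <| by simp [funext_iff, sourceState]

theorem apply_sourceState (hx : x ∈ V) (f : (Fin m → Prop) → K) : WUMSODefinable V (range m)
    fun (_ : NestedWord Δ) γ1 γ2 => f (sourceState m γ2 (γ1 x)) :=
  comp (sourceState_eq hx) fun p => const (f p)

theorem apply_sourceState_one (f : (Fin m → Prop) → K) : WUMSODefinable V (range m)
    fun (_ : NestedWord Δ) _ γ2 => f (sourceState m γ2 1) := by
  obtain ⟨y, -⟩ := Infinite.exists_notMem_finset V
  have hy := mem_insert_self y V
  refine ((eq_one hy).mul (apply_sourceState hy f)).sum_pos.congr fun nw _ γ2 _ => ?_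
  simp only [update_self]
  exact sum_indicatorOf_mul (mem_Icc.2 ⟨le_rfl, nw.len_pos⟩) (fun _ _ => Iff.rfl)
    fun i => f (sourceState m γ2 i)

theorem apply_sourceState_succ (hx : x ∈ V) (f : (Fin m → Prop) → K) (b : K) :
    WUMSODefinable V (range m) fun (nw : NestedWord Δ) γ1 γ2 =>
      if γ1 x < nw.len then f (sourceState m γ2 (γ1 x + 1)) else b := by
  obtain ⟨y, hy⟩ := Infinite.exists_notMem_finset V
  have hy' := mem_insert_self y V
  refine (((eq_succ (mem_insert_of_mem hx) hy').mul (apply_sourceState hy' f)).sum_pos.add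
    ((eq_len hx).mul (const b))).congr fun nw γ1 γ2 hγ => ?_
  simp only [update_self, update_of_ne (ne_of_mem_of_not_mem hx hy)]
  have hpos := mem_Icc.1 (hγ x hx)
  split_ifs with h
  · rw [sum_indicatorOf_mul (mem_Icc.2 ⟨Nat.le_add_left _ _, h⟩) (fun _ _ => Iff.rfl)
      fun i => f (sourceState m γ2 i), indicatorOf, if_neg h.ne, zero_mul, add_zero]
  · rw [sum_eq_zero fun i hi => ?_, zero_add, indicatorOf, if_pos (by omega), one_mul]
    rw [indicatorOf, if_neg (by have := mem_Icc.1 hi; omega), zero_mul]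

theorem apply_sourceState_back (hx : x ∈ V) (f : (Fin m → Prop) → K) :
    WUMSODefinable V (range m) fun (nw : NestedWord Δ) γ1 γ2 =>
      f (sourceState m γ2 (nw.back (γ1 x) + 1)) := by
  obtain ⟨y, hy⟩ := Infinite.exists_notMem_finset V
  have hy' := mem_insert_self y V
  refine (comp (kind_eq hx) (G := fun
    | .ret => fun nw γ1 γ2 => ∑ i ∈ Icc 1 nw.len, indicatorOf K (nw.rel i (γ1 x)) *
        f (sourceState m γ2 i)
    | .call | .int => fun _ γ1 γ2 => f (sourceState m γ2 (γ1 x))) fun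
    | .ret => ((rel hy' (mem_insert_of_mem hx)).mul (apply_sourceState hy' f)).sum_pos.congr
        fun nw γ1 γ2 _ => by simp only [update_self, update_of_ne (ne_of_mem_of_not_mem hx hy)]
    | .call | .int => apply_sourceState hx f).congr fun nw γ1 γ2 hγ => ?_
  have hpos := mem_Icc.1 (hγ x hx)
  cases hk : nw.kind (γ1 x) with
  | call | int =>
    rw [back_of_kind_ne_ret (by rw [hk]; nofun), Nat.sub_add_cancel hpos.1]
  | ret =>
    have hback := nw.back_le (γ1 x)
    exact sum_indicatorOf_mul (mem_Icc.2 (by omega))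
      (fun i _ => by simp only [rel_iff, hγ x hx, hk, true_and, eq_comm])
      fun i => f (sourceState m γ2 i)

theorem sourceWeight [Finite Δ]
    (t : PosKind → (Fin m → Prop) → (Fin m → Prop) → Δ → (Fin m → Prop) → K)
    (κ : (Fin m → Prop) → K) (hx : x ∈ V) : WUMSODefinable V (range m) fun nw γ1 γ2 =>
      sourceWeight t κ nw (sourceState m γ2) (γ1 x) :=
  comp (kind_eq hx) fun k => comp (sourceState_eq hx) fun p =>
    comp (fun c => apply_sourceState_back hx fun p => indicatorOf K (p = c)) fun c =>
      comp (letter_eq hx) fun a =>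
        apply_sourceState_succ hx (t k p c a) (∑ q, t k p c a q * κ q)

end WUMSODefinable

end WeaklyUnambiguousSeries

section DefinabilityOfRegularSeries

open Finset Function NestedWord

variable {K Δ : Type}

mutual

theorem PlusOf.swrmso {ψ : MSOF Δ} {φ : WMSO K Δ} (h : PlusOf K ψ φ) : SWRMSO φ :=
  match h with
  | .eqv .. | .lab .. | .lev .. | .nuv .. | .mem .. => trivial
  | .not h => h.swrmso
  | .or h h' h'' => ⟨h.swrmso, h'.swrmso, h''.swrmso⟩
  | .and h h' => ⟨h.swrmso, h'.swrmso⟩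
  | .exF _ _ h h' => ⟨h.swrmso, .unamb ⟨_, .inr h'⟩, h'.swrmso⟩
  | .alF h => ⟨.unamb ⟨_, .inl h⟩, h.swrmso⟩
  | .exS _ _ h h' => ⟨h.swrmso, ⟨_, .inr h'⟩, h'.swrmso⟩
  | .alS h => ⟨⟨_, .inl h⟩, h.swrmso⟩

theorem MinusOf.swrmso {ψ : MSOF Δ} {φ : WMSO K Δ} (h : MinusOf K ψ φ) : SWRMSO φ :=
  match h with
  | .eqv .. | .lab .. | .lev .. | .nuv .. | .mem .. => trivial
  | .not h => h.swrmso
  | .or h h' => ⟨h.swrmso, h'.swrmso⟩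
  | .and h h' h'' => ⟨h.swrmso, h'.swrmso, h''.swrmso⟩
  | .exF h => ⟨.unamb ⟨_, .inr h⟩, h.swrmso⟩
  | .alF _ _ h h' => ⟨h.swrmso, .unamb ⟨_, .inr h'⟩, h'.swrmso⟩
  | .exS h => ⟨⟨_, .inr h⟩, h.swrmso⟩
  | .alS _ _ h h' => ⟨h.swrmso, ⟨_, .inr h'⟩, h'.swrmso⟩

end

theorem WUMSO.swrmso {φ : WMSO K Δ} (hφ : WUMSO φ) : SWRMSO φ := by
  induction hφ with
  | const => trivial
  | unamb h =>
    obtain ⟨_, h | h⟩ := h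
    exacts [h.swrmso, h.swrmso]
  | and _ _ ih ih' | or _ _ ih ih' => exact ⟨ih, ih'⟩
  | exF _ ih | exS _ ih => exact ih

namespace WMSO

/-- Quantification over the set variables `0, …, m - 1`. -/
def exSs : ℕ → WMSO K Δ → WMSO K Δ
  | 0, φ => φ
  | m + 1, φ => exSs m (.exS m φ)

theorem freeF_exSs (m : ℕ) (φ : WMSO K Δ) : (exSs m φ).freeF = φ.freeF := by
  induction m generalizing φ with
  | zero => rfl
  | succ m ih => exact ih _

theorem freeS_exSs (m : ℕ) (φ : WMSO K Δ) : (exSs m φ).freeS = φ.freeS \ range m := by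
  induction m generalizing φ with
  | zero => simp [exSs]
  | succ m ih =>
    rw [exSs, ih, freeS, range_add_one, sdiff_insert, erase_sdiff_comm]

/-- The assignment `γ2` with the set variable `X < m` reassigned to the positions marked by
`f X`. -/
noncomputable def assignSets {m n : ℕ} (f : Fin m → Fin n → Prop) (γ2 : ℕ → Finset ℕ) (X : ℕ) :
    Finset ℕ :=
  if h : X < m then markedSet (f ⟨X, h⟩) else γ2 X

theorem update_assignSets {m n : ℕ} (f : Fin m → Fin n → Prop) (u : Fin n → Prop)
    (γ2 : ℕ → Finset ℕ) : update (assignSets f γ2) m (markedSet u) =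
      assignSets (Fin.snoc (α := fun _ => Fin n → Prop) f u) γ2 := by
  funext X
  obtain hX | rfl | hX := lt_trichotomy X m
  · simp [assignSets, Fin.snoc, hX, hX.ne, hX.trans (Nat.lt_succ_self _)]
  · simp [assignSets, Fin.snoc]
  · simp [assignSets, hX.ne', hX.not_gt, (Nat.succ_le_of_lt hX).not_gt]

theorem sem_exSs [CommSemiring K] (nw : NestedWord Δ) (m : ℕ) (φ : WMSO K Δ) (γ1 : ℕ → ℕ)
    (γ2 : ℕ → Finset ℕ) : (exSs m φ).sem nw γ1 γ2 =
      ∑ f : Fin m → Fin nw.len → Prop, φ.sem nw γ1 (assignSets f γ2) := by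
  induction m generalizing φ with
  | zero =>
    rw [Fintype.sum_unique]
    exact congrArg _ (funext fun X => (dif_neg X.not_lt_zero : assignSets _ _ X = _).symm)
  | succ m ih =>
    rw [exSs, ih, ← (Fin.snocEquiv fun _ => Fin nw.len → Prop).sum_comp,
      Fintype.sum_prod_type_right]
    refine sum_congr rfl fun f _ => ?_
    rw [sem, sum_powerset_Icc_one]
    exact sum_congr rfl fun u _ => congrArg _ (update_assignSets f u γ2)

end WMSO

theorem SWRMSO.exSs {φ : WMSO K Δ} (hφ : SWRMSO φ) (m : ℕ) : SWRMSO (φ.exSs m) := by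
  induction m generalizing φ with
  | zero => exact hφ
  | succ m ih => exact ih (φ := .exS m φ) hφ

theorem WUMSODefinable.nwDefinable [CommSemiring K] {m : ℕ}
    {F : NestedWord Δ → (ℕ → Fin m → Prop) → K} {G : NestedWord Δ → (ℕ → Fin m → Prop) → ℕ → K}
    (hF : WUMSODefinable ∅ (range m) fun nw _ γ2 => F nw (sourceState m γ2))
    (hG : WUMSODefinable {0} (range m) fun nw γ1 γ2 => G nw (sourceState m γ2) (γ1 0)) :
    NWDefinable SWRMSO fun nw => ∑ u : Fin nw.len → Fin m → Prop,
      F nw (fun j X => j ∈ markedSet fun i => u i X) *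
        ∏ j ∈ Icc 1 nw.len, G nw (fun j X => j ∈ markedSet fun i => u i X) j := by
  obtain ⟨φ, hφ, hφF, hφS, hφsem⟩ := hF
  obtain ⟨χ, hχ, hχF, hχS, hχsem⟩ := hG
  refine ⟨.exSs m (.and φ (.alF 0 χ)),
    SWRMSO.exSs (φ := .and φ (.alF 0 χ)) ⟨hφ.swrmso, hχ, hχ.swrmso⟩ m, ⟨?_, ?_⟩,
    fun nw γ1 γ2 => ?_⟩
  · rw [WMSO.freeF_exSs, WMSO.freeF, WMSO.freeF, subset_empty.1 hφF, empty_union,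
      ← subset_empty]
    exact (erase_subset_erase 0 hχF).trans (by simp)
  · rw [WMSO.freeS_exSs, sdiff_eq_empty_iff_subset]
    exact union_subset hφS hχS
  · rw [WMSO.sem_exSs, ← (Equiv.piComm fun _ _ => Prop).sum_comp]
    refine sum_congr rfl fun u _ => ?_
    have hstate : sourceState m (WMSO.assignSets (fun X i => u i X) γ2) =
        fun j X => j ∈ markedSet fun i => u i X := by
      funext j X
      simp [sourceState, WMSO.assignSets]
    rw [WMSO.sem, WMSO.sem]
    refine congrArg₂ _ ((hφsem _ _ _ (by simp)).trans (congrArg (F nw) hstate))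
      (prod_congr rfl fun j hj => (hχsem _ _ _ (by simpa using hj)).trans ?_)
    exact congrArg₂ (G nw) hstate (update_self ..)

theorem NWRegular.nwDefinable [CommSemiring K] [Finite Δ] {S : NestedWord Δ → K}
    (hS : NWRegular S) : NWDefinable SWRMSO S := by
  obtain ⟨m, ι, t, κ, rfl⟩ := hS.exists_runSum_bits
  have hrun := funext fun nw => runSum_eq_sum_sourceWeight ι t κ nw
    (σ := fun u j X => j ∈ markedSet fun i => u i X)
    fun _ i => funext fun _ => propext (succ_mem_markedSet i)
  rw [hrun]
  exact (WUMSODefinable.apply_sourceState_one ι).nwDefinable (F := fun _ σ => ι (σ 1))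
    (G := sourceWeight t κ) (WUMSODefinable.sourceWeight t κ (mem_singleton_self 0))

end DefinabilityOfRegularSeries

/-- **Theorem (Mathissen).** Over an additively locally finite commutative semiring,
a nested word series is regular iff it is `swRMSO(K)`-definable. -/
theorem regular_iff_swRMSO_definable_of_addLocallyFinite
    (K Δ : Type) [CommSemiring K] [Fintype Δ] (h01 : (0 : K) ≠ 1)
    (hK : AddLocallyFinite K) (S : NestedWord Δ → K) :
    NWRegular S ↔ NWDefinable SWRMSO S :=
  ⟨NWRegular.nwDefinable, NWDefinable.nwRegular hK⟩
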